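/- For every odd prime p and every ε ∈ (0,1], there exist a positive integer n1(p,ε) and c = c(p,ε) ∈ (0,1/2] such that the following holds for all positive integers n ≥ n1(p,ε) and k. Suppose that for independent uniformly distributed directions z_1, …, z_k ∈ PF_p^{n−1} (the projective space of directions in F_p^n), with probability at least 1/2 there exists a set B ⊆ F_p^n with |B| ≥ ε·p^n that contains no line with direction in {z_1, …, z_k}. Then there exists a (p, c, c)-locally decodable code sending {0,1}^l to {0,1}^{p^n}, where l = Ω(c²·k / log(1/c)) (with an absolute implied constant). -/

import Mathlib

/-- A randomized non-adaptive `q`-query decoder for codewords in `{0,1}^n`, modeled as a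
finitely supported probability distribution over pairs `(S, g)` where `S` is the query set
(of size at most `q`) and `g` is an output function depending only on the coordinates in `S`. -/
structure Decoder (n q : ℕ) where
  p : Finset (Fin n) × ((Fin n → Bool) → Bool) → ℝ
  nonneg : ∀ a, 0 ≤ p a
  sum_one : ∑ a, p a = 1
  query_bound : ∀ a, p a ≠ 0 → a.1.card ≤ q
  local_dep : ∀ a, p a ≠ 0 → ∀ y y' : Fin n → Bool, (∀ j ∈ a.1, y j = y' j) → a.2 y = a.2 y'

/-- The probability that the decoder `D`, run on input `y`, outputs the bit `b`. -/
noncomputable def Decoder.correctProb {n q : ℕ} (D : Decoder n q) (y : Fin n → Bool)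
    (b : Bool) : ℝ :=
  ∑ a : Finset (Fin n) × ((Fin n → Bool) → Bool), if a.2 y = b then D.p a else 0

/-- The probability that the decoder `D` queries coordinate `j`. -/
noncomputable def Decoder.queryProb {n q : ℕ} (D : Decoder n q) (j : Fin n) : ℝ :=
  ∑ a : Finset (Fin n) × ((Fin n → Bool) → Bool), if j ∈ a.1 then D.p a else 0

/-- `C : {0,1}^k → {0,1}^n` is a `(q,δ,η)`-locally decodable code. -/
def IsLDC (k n q : ℕ) (δ η : ℝ) (C : (Fin k → Bool) → Fin n → Bool) : Prop :=
  ∀ i : Fin k, ∃ D : Decoder n q,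
    ∀ x : Fin k → Bool, ∀ y : Fin n → Bool,
      ((Finset.univ.filter fun j => y j ≠ C x j).card : ℝ) ≤ δ * n →
      1/2 + η ≤ D.correctProb y (x i)

/-- `C : {0,1}^k → {0,1}^n` is a `(q,c,η)`-smooth code. -/
def IsSmoothCode (k n q : ℕ) (c η : ℝ) (C : (Fin k → Bool) → Fin n → Bool) : Prop :=
  ∀ i : Fin k, ∃ D : Decoder n q,
    (∀ x : Fin k → Bool, 1/2 + η ≤ D.correctProb (C x) (x i)) ∧
    ∀ j : Fin n, D.queryProb j ≤ c / n

/-- `C : {0,1}^k → {0,1}^n` is a `(q,c,η)`-average-case smooth code: the success probability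
`1/2 + η` is only required on average over a uniform message `x` and uniform index `i`. -/
def IsAvgSmoothCode (k n q : ℕ) (c η : ℝ) (C : (Fin k → Bool) → Fin n → Bool) : Prop :=
  ∃ D : Fin k → Decoder n q,
    (∀ i : Fin k, ∀ j : Fin n, (D i).queryProb j ≤ c / n) ∧
    1/2 + η ≤ (∑ x : Fin k → Bool, ∑ i : Fin k, (D i).correctProb (C x) (x i)) / (2^k * k)


namespace FD

noncomputable def av {X : Type*} (f : X → ℝ) : ℝ := (∑ᶠ x, f x) / Nat.card X

open Classical in
noncomputable def ind (P : Prop) : ℝ := if P then 1 else 0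

theorem ind_nonneg (P : Prop) : 0 ≤ ind P := by unfold ind; split <;> norm_num
theorem ind_le_one (P : Prop) : ind P ≤ 1 := by unfold ind; split <;> norm_num
theorem ind_true {P : Prop} (h : P) : ind P = 1 := by simp [ind, h]
theorem ind_false {P : Prop} (h : ¬ P) : ind P = 0 := by simp [ind, h]
theorem ind_and (P Q : Prop) : ind (P ∧ Q) = ind P * ind Q := by
  by_cases hP : P <;> by_cases hQ : Q <;> simp [ind, hP, hQ]
theorem ind_mono {P Q : Prop} (h : P → Q) : ind P ≤ ind Q := by
  by_cases hP : P
  · rw [ind_true hP, ind_true (h hP)]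
  · rw [ind_false hP]; exact ind_nonneg _

section av
variable {X Y : Type*}

theorem av_eq [Fintype X] (f : X → ℝ) : av f = (∑ x, f x) / Fintype.card X := by
  unfold av; rw [finsum_eq_sum_of_fintype, Nat.card_eq_fintype_card]

theorem av_const [Finite X] [Nonempty X] (c : ℝ) : av (fun _ : X => c) = c := by
  cases nonempty_fintype X
  rw [av_eq]; simp

theorem av_add [Finite X] (f g : X → ℝ) : av (fun x => f x + g x) = av f + av g := by
  cases nonempty_fintype X
  simp only [av_eq, Finset.sum_add_distrib, add_div]

theorem av_sub [Finite X] (f g : X → ℝ) : av (fun x => f x - g x) = av f - av g := by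
  cases nonempty_fintype X
  simp only [av_eq, Finset.sum_sub_distrib, sub_div]

theorem av_mul [Finite X] (c : ℝ) (f : X → ℝ) : av (fun x => c * f x) = c * av f := by
  cases nonempty_fintype X
  simp only [av_eq, ← Finset.mul_sum, mul_div_assoc]

theorem av_mono [Finite X] {f g : X → ℝ} (h : ∀ x, f x ≤ g x) : av f ≤ av g := by
  cases nonempty_fintype X
  simp only [av_eq]
  gcongr with x
  exact h x

theorem av_nonneg [Finite X] {f : X → ℝ} (h : ∀ x, 0 ≤ f x) : 0 ≤ av f := by
  cases nonempty_fintype X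
  simp only [av_eq]
  exact div_nonneg (Finset.sum_nonneg fun x _ => h x) (by positivity)

theorem av_le [Finite X] [Nonempty X] {f : X → ℝ} {c : ℝ} (h : ∀ x, f x ≤ c) : av f ≤ c :=
  (av_mono h).trans_eq (av_const c)

theorem le_av [Finite X] [Nonempty X] {f : X → ℝ} {c : ℝ} (h : ∀ x, c ≤ f x) : c ≤ av f :=
  (av_const c).symm.trans_le (av_mono h)

theorem exists_le_av [Finite X] [Nonempty X] {f : X → ℝ} {c : ℝ} (h : c ≤ av f) :
    ∃ x, c ≤ f x := by
  by_contra hc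
  push Not at hc
  cases nonempty_fintype X
  rw [av_eq, le_div_iff₀ (by positivity)] at h
  have : ∑ x, f x < ∑ _x : X, c :=
    Finset.sum_lt_sum_of_nonempty Finset.univ_nonempty (fun x _ => hc x)
  simp at this
  linarith

theorem av_equiv (e : X ≃ Y) (f : Y → ℝ) : av (fun x => f (e x)) = av f := by
  unfold av
  rw [Nat.card_congr e]
  congr 1
  exact finsum_comp_equiv e

theorem av_prod [Finite X] [Finite Y] (f : X × Y → ℝ) :
    av f = av fun x => av fun y => f (x, y) := by
  cases nonempty_fintype X
  cases nonempty_fintype Y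
  simp only [av_eq, Fintype.sum_prod_type, Fintype.card_prod, ← Finset.sum_div]
  push_cast
  rw [div_div, mul_comm]

theorem av_comm [Finite X] [Finite Y] (f : X → Y → ℝ) :
    (av fun x => av fun y => f x y) = av fun y => av fun x => f x y := by
  rw [← av_prod (fun z : X × Y => f z.1 z.2), ← av_prod (fun z : Y × X => f z.2 z.1)]
  exact (av_equiv (Equiv.prodComm X Y) (fun z : Y × X => f z.2 z.1))

theorem av_sum [Finite X] {I : Type*} (s : Finset I) (f : I → X → ℝ) :
    av (fun x => ∑ i ∈ s, f i x) = ∑ i ∈ s, av (f i) := by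
  cases nonempty_fintype X
  simp only [av_eq, ← Finset.sum_div]
  rw [Finset.sum_comm]

theorem av_word {ι κ α : Type*} [Finite ι] [Finite κ] [Finite α] (f : (ι ⊕ κ → α) → ℝ) :
    av f = av fun x : ι → α => av fun y : κ → α => f (Sum.elim x y) := by
  rw [← av_prod (fun z : (ι → α) × (κ → α) => f (Sum.elim z.1 z.2))]
  exact (av_equiv (Equiv.sumArrowEquivProdArrow ι κ α).symm f).symm

/-- Markov type inequality. -/
theorem av_markov [Finite X] [Nonempty X] {f : X → ℝ} {c d : ℝ} (hf : ∀ x, f x ≤ 1)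
    (h : c + d ≤ av f) (hd : 0 ≤ d) : c ≤ av fun x => ind (d ≤ f x) := by
  have : av f ≤ av (fun x => ind (d ≤ f x) + d) := by
    apply av_mono
    intro x
    by_cases hx : d ≤ f x
    · rw [ind_true hx]; linarith [hf x]
    · rw [ind_false hx]; linarith
  rw [av_add, av_const] at this
  linarith

theorem av_ind_card [Finite X] (S : Set X) : av (fun x => ind (x ∈ S)) = S.ncard / Nat.card X := by
  classical
  cases nonempty_fintype X
  rw [av_eq, Nat.card_eq_fintype_card]
  congr 1
  rw [Set.ncard_eq_toFinset_card']
  simp [ind, Finset.sum_ite]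
  

theorem av_pi {ι α : Type*} [Finite ι] [Finite α] [Nonempty α] (S : ι → Set α) (s : Finset ι)
    (r : ℝ) (hr : ∀ i ∈ s, av (fun a => ind (a ∈ S i)) ≤ r) (hr0 : 0 ≤ r) :
    av (fun x : ι → α => ind (∀ i ∈ s, x i ∈ S i)) ≤ r ^ s.card := by
  classical
  cases nonempty_fintype ι
  cases nonempty_fintype α
  have key : av (fun x : ι → α => ind (∀ i ∈ s, x i ∈ S i)) =
      ∏ i, (if i ∈ s then av (fun a => ind (a ∈ S i)) else 1) := by
    have h1 : ∀ x : ι → α, ind (∀ i ∈ s, x i ∈ S i) =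
        ∏ i, (if i ∈ s then ind (x i ∈ S i) else 1) := by
      intro x
      rw [Finset.prod_ite_mem]
      simp only [Finset.univ_inter]
      by_cases h : ∀ i ∈ s, x i ∈ S i
      · rw [ind_true h, Finset.prod_eq_one]
        intro i hi; exact ind_true (h i hi)
      · rw [ind_false h]
        push Not at h
        obtain ⟨i, hi, hx⟩ := h
        exact (Finset.prod_eq_zero hi (ind_false hx)).symm
    have h2 : ∀ i, (if i ∈ s then av (fun a => ind (a ∈ S i)) else 1) =
        (∑ a, (if i ∈ s then ind (a ∈ S i) else 1)) / Fintype.card α := by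
      intro i
      split
      · rw [av_eq]
      · simp
    simp only [h2, h1]
    rw [av_eq, Finset.prod_div_distrib, Finset.prod_univ_sum]
    simp
  rw [key, Finset.prod_ite_mem]
  simp only [Finset.univ_inter]
  calc _ ≤ ∏ _i ∈ s, r := by
        apply Finset.prod_le_prod
        · intro i _; exact av_nonneg fun _ => ind_nonneg _
        · exact hr
    _ = _ := by simp

end av

end FD

namespace FD
open Combinatorics

section sub
variable {α β σ τ ι κ : Type}

def comp (V : Subspace σ α ι) (W : Subspace τ α σ) : Subspace τ α ι where
  idxFun i := (V.idxFun i).elim Sum.inl W.idxFun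
  proper e := by
    obtain ⟨j, hj⟩ := W.proper e
    obtain ⟨i, hi⟩ := V.proper j
    exact ⟨i, by simp [hi, hj]⟩

theorem comp_apply (V : Subspace σ α ι) (W : Subspace τ α σ) (x : τ → α) :
    comp V W x = V (W x) := by
  ext i
  simp only [Subspace.coe_apply, comp]
  cases h : V.idxFun i <;> simp [Subspace.coe_apply]

def hor (V : Subspace σ α ι) (y : κ → α) : Subspace σ α (ι ⊕ κ) where
  idxFun := Sum.elim V.idxFun (Sum.inl ∘ y)
  proper e := by
    obtain ⟨i, hi⟩ := V.proper e
    exact ⟨Sum.inl i, by simp [hi]⟩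

theorem hor_apply (V : Subspace σ α ι) (y : κ → α) (x : σ → α) :
    hor V y x = Sum.elim (V x) y := by
  ext i
  cases i <;> simp [Subspace.coe_apply, hor]

def ver (y : κ → α) (V : Subspace σ α ι) : Subspace σ α (κ ⊕ ι) where
  idxFun := Sum.elim (Sum.inl ∘ y) V.idxFun
  proper e := by
    obtain ⟨i, hi⟩ := V.proper e
    exact ⟨Sum.inr i, by simp [hi]⟩

theorem ver_apply (y : κ → α) (V : Subspace σ α ι) (x : σ → α) :
    ver y V x = Sum.elim y (V x) := by
  ext i
  cases i <;> simp [Subspace.coe_apply, ver]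

def lift (V : Subspace σ β ι) : Subspace σ (Option β) ι where
  idxFun i := (V.idxFun i).map some id
  proper e := by
    obtain ⟨i, hi⟩ := V.proper e
    exact ⟨i, by simp [hi]⟩

theorem lift_some (V : Subspace σ β ι) (x : σ → β) : lift V (some ∘ x) = some ∘ V x := by
  ext i
  simp only [Subspace.coe_apply, lift, Function.comp]
  cases h : V.idxFun i <;> simp

theorem lift_comp (V : Subspace σ β ι) (W : Subspace τ β σ) (x : τ → Option β) :
    lift (comp V W) x = lift V (lift W x) := by
  ext i
  simp only [Subspace.coe_apply, lift, comp]
  cases h : V.idxFun i <;> simp [Subspace.coe_apply]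

def lineIn (V : Subspace σ α ι) (l : Line α σ) : Line α ι where
  idxFun i := (V.idxFun i).elim some l.idxFun
  proper := by
    obtain ⟨j, hj⟩ := l.proper
    obtain ⟨i, hi⟩ := V.proper j
    exact ⟨i, by simp [hi, hj]⟩

theorem lineIn_apply (V : Subspace σ α ι) (l : Line α σ) (a : α) :
    lineIn V l a = V (l a) := by
  ext i
  simp only [Subspace.coe_apply, lineIn, Line.coe_apply]
  cases h : V.idxFun i <;> simp

theorem sub_inj (V : Subspace σ α ι) : Function.Injective (fun x : σ → α => V x) := by
  intro x y h
  ext e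
  obtain ⟨i, hi⟩ := V.proper e
  have := congrFun h i
  simpa [Subspace.coe_apply, hi] using this

def optS (l : Line α ι) (V : Subspace σ α κ) : Subspace (Option σ) α (ι ⊕ κ) where
  idxFun := Sum.elim (fun i => (l.idxFun i).elim (Sum.inr none) Sum.inl)
    (fun i => (V.idxFun i).map id some)
  proper e := by
    cases e with
    | none =>
      obtain ⟨i, hi⟩ := l.proper
      exact ⟨Sum.inl i, by simp [hi]⟩
    | some e =>
      obtain ⟨i, hi⟩ := V.proper e
      exact ⟨Sum.inr i, by simp [hi]⟩

theorem optS_apply (l : Line α ι) (V : Subspace σ α κ) (x : Option σ → α) :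
    optS l V x = Sum.elim (l (x none)) (V (fun j => x (some j))) := by
  ext i
  cases i with
  | inl i =>
    simp only [Subspace.coe_apply, optS, Sum.elim_inl, Line.coe_apply]
    cases l.idxFun i <;> simp
  | inr i =>
    simp only [Subspace.coe_apply, optS, Sum.elim_inr]
    cases V.idxFun i <;> simp

theorem lift_optS (l : Line β ι) (V : Subspace σ β κ) (x : Option σ → Option β) :
    lift (optS l V) x = Sum.elim ((l.map some) (x none)) (lift V (fun j => x (some j))) := by
  ext i
  cases i with
  | inl i =>
    simp only [Subspace.coe_apply, optS, lift, Sum.elim_inl, Line.coe_apply, Line.map]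
    cases l.idxFun i <;> simp
  | inr i =>
    simp only [Subspace.coe_apply, optS, lift, Sum.elim_inr]
    cases V.idxFun i <;> simp

def idS (ι α : Type) : Subspace ι α ι := ⟨Sum.inr, fun i => ⟨i, rfl⟩⟩
theorem idS_apply (x : ι → α) : idS ι α x = x := by ext i; simp [Subspace.coe_apply, idS]

end sub

def DH (α ι : Type) (δ : ℝ) : Prop :=
  ∀ A : Set (ι → α), δ ≤ av (fun x => ind (x ∈ A)) → ∃ l : Line α ι, ∀ a, l a ∈ A

def HasN (α : Type) (δ : ℝ) : Prop := ∃ ι : Type, Finite ι ∧ DH α ι δ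

theorem mdhj {β : Type} [Finite β] [Nonempty β] (H : ∀ δ : ℝ, 0 < δ → HasN β δ) (σ : Type)
    [Finite σ] : ∀ δ : ℝ, 0 < δ → ∃ ι : Type, Finite ι ∧
      ∀ A : Set (ι → β), δ ≤ av (fun x => ind (x ∈ A)) → ∃ V : Subspace σ β ι, ∀ x, V x ∈ A := by
  induction σ using Finite.induction_empty_option with
  | of_equiv e ih =>
    intro δ hδ
    obtain ⟨ι, hι, h⟩ := ih δ hδ
    refine ⟨ι, hι, fun A hA => ?_⟩
    obtain ⟨V, hV⟩ := h A hA
    refine ⟨V.reindex e (Equiv.refl _) (Equiv.refl _), fun x => ?_⟩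
    have : V.reindex e (Equiv.refl _) (Equiv.refl _) x = V (x ∘ e) := by
      ext i; simp
    rw [this]; exact hV _
  | h_empty =>
    intro δ hδ
    refine ⟨Empty, inferInstance, fun A hA => ?_⟩
    obtain ⟨x, hx⟩ := exists_le_av hA
    have hxA : x ∈ A := by
      by_contra h
      rw [ind_false h] at hx; linarith
    refine ⟨⟨fun i => i.elim, fun e => e.elim⟩, fun y => ?_⟩
    convert hxA
  | h_option ih =>
    rename_i σ _
    intro δ hδ
    obtain ⟨ι₁, hι₁, h₁⟩ := H (δ / 2) (by positivity)
    have : Finite (Line β ι₁) := Finite.of_injective Line.idxFun (fun a b h => Line.ext h)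
    cases nonempty_fintype (Line β ι₁)
    obtain ⟨ι₂, hι₂, h₂⟩ := ih ((δ / 2) / (Fintype.card (Line β ι₁) + 1)) (by positivity)
    refine ⟨ι₁ ⊕ ι₂, inferInstance, fun A hA => ?_⟩
    rw [av_word, av_comm] at hA
    have hM := av_markov (c := δ / 2) (d := δ / 2)
      (fun y => av_le fun x => ind_le_one _) (by linarith) (by positivity) (f := fun y : ι₂ → β =>
        av fun x : ι₁ → β => ind (Sum.elim x y ∈ A))
    have hM2 : δ / 2 ≤ ∑ l : Line β ι₁,
        av (fun y : ι₂ → β => ind (∀ a, Sum.elim (l a) y ∈ A)) := by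
      rw [← av_sum]
      refine hM.trans (av_mono fun y => ?_)
      by_cases hy : δ / 2 ≤ av fun x : ι₁ → β => ind (Sum.elim x y ∈ A)
      · obtain ⟨l, hl⟩ := h₁ {x | Sum.elim x y ∈ A} hy
        rw [ind_true hy]
        refine le_trans (ind_true (P := ∀ a, Sum.elim (l a) y ∈ A) hl).symm.le ?_
        exact Finset.single_le_sum (f := fun l : Line β ι₁ => ind (∀ a, Sum.elim (l a) y ∈ A))
          (fun _ _ => ind_nonneg _) (Finset.mem_univ l)
      · rw [ind_false hy]
        exact Finset.sum_nonneg fun _ _ => ind_nonneg _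
    have : ∃ l : Line β ι₁, (δ / 2) / (Fintype.card (Line β ι₁) + 1) ≤
        av (fun y : ι₂ → β => ind (∀ a, Sum.elim (l a) y ∈ A)) := by
      by_contra hc
      push Not at hc
      have := Finset.sum_le_sum (s := Finset.univ) (fun l _ => (hc l).le)
      simp only [Finset.sum_const, nsmul_eq_mul, Finset.card_univ] at this
      have h3 := hM2.trans this
      rw [mul_div_assoc', le_div_iff₀ (by positivity)] at h3
      nlinarith
    obtain ⟨l, hl⟩ := this
    obtain ⟨V, hV⟩ := h₂ {y | ∀ a, Sum.elim (l a) y ∈ A} hl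
    refine ⟨optS l V, fun x => ?_⟩
    rw [optS_apply]
    exact hV _ _

/-- Colour depends only on the set of variable positions. -/
theorem stageA {β : Type} [Finite β] [Nonempty β] (σ : Type) [Finite σ] :
    ∀ (r : Type) [Finite r], ∃ ι : Type, Finite ι ∧ ∀ c : (ι → Option β) → r,
      ∃ V : Subspace σ β ι, ∀ x x' : σ → Option β, (∀ j, x j = none ↔ x' j = none) →
        c (lift V x) = c (lift V x') := by
  induction σ using Finite.induction_empty_option with
  | of_equiv e ih =>
    intro r _
    obtain ⟨ι, hι, h⟩ := ih r
    refine ⟨ι, hι, fun c => ?_⟩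
    obtain ⟨V, hV⟩ := h c
    refine ⟨V.reindex e (Equiv.refl _) (Equiv.refl _), fun x x' hx => ?_⟩
    have : ∀ x, lift (V.reindex e (Equiv.refl _) (Equiv.refl _)) x = lift V (x ∘ e) := by
      intro x
      ext i
      simp only [lift, Subspace.reindex, Subspace.coe_apply]
      cases h : V.idxFun i <;> simp [h]
    rw [this, this]
    exact hV _ _ fun j => hx (e j)
  | h_empty =>
    intro r _
    refine ⟨Empty, inferInstance, fun c => ⟨⟨fun i => i.elim, fun e => e.elim⟩, fun x x' _ => ?_⟩⟩
    congr 1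
    ext i; exact i.elim
  | h_option ih =>
    rename_i σ _
    intro r _
    obtain ⟨ι₂, hι₂, h₂⟩ := ih (r × r)
    obtain ⟨ι₁, hι₁, h₁⟩ := Line.exists_mono_in_high_dimension β ((ι₂ → Option β) → r)
    refine ⟨ι₁ ⊕ ι₂, inferInstance, fun c => ?_⟩
    obtain ⟨l, C, hl⟩ := h₁ fun v y => c (Sum.elim (some ∘ v) y)
    let b₀ : β := Classical.arbitrary β
    obtain ⟨V, hV⟩ := h₂ fun y => (C y, c (Sum.elim ((l.map some) none) y))
    refine ⟨optS l V, fun x x' hx => ?_⟩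
    rw [lift_optS, lift_optS]
    have h3 := hV (fun j => x (some j)) (fun j => x' (some j)) (fun j => hx (some j))
    rw [Prod.mk.injEq] at h3
    have h4 := hx none
    have h5 : ∀ b y, c (Sum.elim ((l.map some) (some b)) y) = C y := by
      intro b y
      rw [Line.map_apply]
      exact congrFun (hl b) y
    cases h6 : x none with
    | none =>
      rw [h4.1 h6]
      exact h3.2
    | some b =>
      cases h7 : x' none with
      | none => rw [h4.2 h7] at h6; cases h6
      | some b' =>
        rw [h5, h5]; exact h3.1

def asm {σ ι : Type} (T : σ → Option ι) (I : ι → Bool) : σ → Bool := fun s => (T s).elim false I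

theorem fuMax (r : Type) [Finite r] (n : ℕ) : ∃ σ : Type, Finite σ ∧ ∀ c : (σ → Bool) → r,
    ∃ T : σ → Option (Fin n), (∀ j, ∃ s, T s = some j) ∧ ∃ g : Fin n → r, ∀ I j,
      I j = true → (∀ i, j < i → I i = false) → c (asm T I) = g j := by
  induction n with
  | zero =>
    exact ⟨Empty, inferInstance, fun c => ⟨fun s => s.elim, fun j => j.elim0,
      fun j => j.elim0, fun I j => j.elim0⟩⟩
  | succ n ih =>
    obtain ⟨σ, hσ, h⟩ := ih
    obtain ⟨ι, hι, hU⟩ := Subspace.exists_mono_in_high_dimension Bool r σ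
    refine ⟨Option ι, inferInstance, fun c => ?_⟩
    obtain ⟨U, c₁, hU⟩ := hU fun w => c (fun o => o.elim true w)
    obtain ⟨T, hT, g, hg⟩ := h fun w => c (fun o => o.elim false
      fun i => (U.idxFun i).elim (fun _ => false) w)
    refine ⟨fun o => o.elim (some (Fin.last n)) fun i => (U.idxFun i).elim
      (fun b => if b then some (Fin.last n) else none) (fun s => (T s).map Fin.castSucc), ?_,
      Fin.snoc g c₁, ?_⟩
    · intro j
      refine Fin.lastCases ?_ (fun j => ?_) j
      · exact ⟨none, rfl⟩
      · obtain ⟨s, hs⟩ := hT j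
        obtain ⟨i, hi⟩ := U.proper s
        exact ⟨some i, by simp [hi, hs]⟩
    · intro I j
      refine Fin.lastCases ?_ (fun j => ?_) j
      · intro hj _
        rw [Fin.snoc_last, ← hU (asm T fun i => I i.castSucc)]
        congr 1
        ext o
        cases o with
        | none => simp [asm, hj]
        | some i =>
          simp only [asm, Option.elim_some, Subspace.coe_apply]
          cases h : U.idxFun i with
          | inl b => cases b <;> simp [hj]
          | inr s => cases h2 : T s <;> simp [h2, asm]
      · intro hj hI
        have hl := hI (Fin.last n) (Fin.castSucc_lt_last j)
        rw [Fin.snoc_castSucc, ← hg (fun i => I i.castSucc) j hj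
          (fun i hi => hI _ (Fin.castSucc_lt_castSucc_iff.2 hi))]
        congr 1
        ext o
        cases o with
        | none => simp [asm, hl]
        | some i =>
          simp only [asm, Option.elim_some]
          cases h : U.idxFun i with
          | inl b => cases b <;> simp [hl]
          | inr s => cases h2 : T s <;> simp [h2, asm]

theorem fu (r : Type) [Finite r] (ι : Type) [Finite ι] : ∃ σ : Type, Finite σ ∧
    ∀ c : (σ → Bool) → r, ∃ T : σ → Option ι, (∀ j, ∃ s, T s = some j) ∧ ∃ col : r, ∀ I : ι → Bool,
      (∃ j, I j = true) → c (asm T I) = col := by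
  classical
  cases nonempty_fintype r
  cases nonempty_fintype ι
  obtain ⟨σ, hσ, h⟩ := fuMax r (Fintype.card r * Fintype.card ι)
  refine ⟨σ, hσ, fun c => ?_⟩
  have : Nonempty r := ⟨c fun _ => false⟩
  obtain ⟨T, hT, g, hg⟩ := h c
  obtain ⟨col, hcol⟩ := Fintype.exists_le_card_fiber_of_mul_le_card g
    (n := Fintype.card ι) (by simp)
  rw [← Fintype.card_coe] at hcol
  obtain ⟨e⟩ := Function.Embedding.nonempty_of_card_le hcol
  obtain ⟨d, he, hinj⟩ : ∃ d : ι → Fin (Fintype.card r * Fintype.card ι), (∀ j, g (d j) = col) ∧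
      ∀ j j', d j = d j' → j = j' :=
    ⟨fun j => (e j).1, fun j => (Finset.mem_filter.1 (e j).2).2, fun j j' h =>
      e.injective (Subtype.ext h)⟩
  clear e hcol
  have hT' : ∀ s, ∃ o : Option ι, ∀ j, o = some j ↔ T s = some (d j) := by
    intro s
    by_cases h : ∃ j, T s = some (d j)
    · obtain ⟨j, hj⟩ := h
      refine ⟨some j, fun j' => ?_⟩
      rw [hj, Option.some_inj, Option.some_inj]
      exact ⟨fun h => by rw [h], hinj _ _⟩
    · exact ⟨none, fun j => ⟨fun h' => by simp at h', fun h' => (h ⟨j, h'⟩).elim⟩⟩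
  choose T' hT' using hT'
  refine ⟨T', ?_, col, ?_⟩
  · intro j
    obtain ⟨s, hs⟩ := hT (d j)
    exact ⟨s, (hT' s j).2 hs⟩
  · rintro I ⟨j₀, hj₀⟩
    let S : Finset ι := Finset.univ.filter fun j => I j = true
    obtain ⟨j, hjS, hj⟩ := Finset.exists_max_image S (fun j => d j)
      ⟨j₀, by simp [S, hj₀]⟩
    rw [← he j, ← hg (fun i => decide (∃ j, d j = i ∧ I j = true)) (d j)]
    · congr 1
      ext s
      simp only [asm]
      cases h : T' s with
      | some j =>
        rw [(hT' s j).1 h]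
        simp only [Option.elim_some]
        symm
        cases h3 : I j with
        | true => simp only [decide_eq_true_eq]; exact ⟨_, rfl, h3⟩
        | false =>
          simp only [decide_eq_false_iff_not]
          rintro ⟨j', h4, h5⟩
          rw [hinj _ _ h4, h3] at h5
          cases h5
      | none =>
        cases h2 : T s with
        | none => simp
        | some i =>
          simp only [Option.elim_some, Option.elim_none]
          symm
          simp only [decide_eq_false_iff_not]
          rintro ⟨j', h4, h5⟩
          have := (hT' s j').2 (by rw [h2, h4])
          rw [h] at this
          cases this
    · simp only [decide_eq_true_eq]
      exact ⟨j, rfl, by simpa [S] using hjS⟩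
    · intro i hi
      simp only [decide_eq_false_iff_not]
      rintro ⟨j', h4, h5⟩
      have := hj j' (by simp [S, h5])
      rw [h4] at this
      exact absurd hi (not_lt.2 this)

theorem gr {β : Type} [Finite β] [Nonempty β] (ι : Type) [Finite ι] : ∃ μ : Type, Finite μ ∧
    ∀ c : (μ → Option β) → Prop, ∃ V : Subspace ι β μ, ∃ col : Prop, ∀ x : ι → Option β,
      (∃ j, x j = none) → (c (lift V x) ↔ col) := by
  classical
  obtain ⟨σ, hσ, h⟩ := fu Prop ι
  obtain ⟨μ, hμ, h'⟩ := stageA (β := β) σ Prop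
  refine ⟨μ, hμ, fun c => ?_⟩
  obtain ⟨V, hV⟩ := h' c
  let b₀ : β := Classical.arbitrary β
  obtain ⟨T, hT, col, hcol⟩ := h fun w => c (lift V fun s => if w s then none else some b₀)
  let W : Subspace ι β σ := ⟨fun s => (T s).elim (Sum.inl b₀) Sum.inr, fun e => by
    obtain ⟨s, hs⟩ := hT e
    exact ⟨s, by simp [hs]⟩⟩
  refine ⟨comp V W, col, fun x hx => ?_⟩
  rw [lift_comp]
  rw [← hcol (fun j => decide (x j = none)) (by simpa using hx)]
  rw [hV]
  intro s
  simp only [Subspace.coe_apply, lift, W, asm]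
  rcases Option.eq_none_or_eq_some (T s) with h9 | ⟨j, h9⟩ <;> simp [h9]

end FD

namespace FD
open Combinatorics

def Ins {β ι : Type} (b : β) (D : Set (ι → Option β)) : Prop :=
  ∀ x y : ι → Option β, (∀ i, (x i).getD b = (y i).getD b) → x ∈ D → y ∈ D

theorem Ins.compl {β ι : Type} {b : β} {D : Set (ι → Option β)} (h : Ins b D) : Ins b Dᶜ :=
  fun x y hxy hx hy => hx (h y x (fun i => (hxy i).symm) hy)

theorem Ins.sub {β ι κ : Type} {b : β} {D : Set (ι → Option β)} (h : Ins b D)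
    (W : Subspace κ (Option β) ι) : Ins b {x | W x ∈ D} := by
  intro x y hxy
  apply h
  intro i
  simp only [Subspace.coe_apply]
  cases W.idxFun i <;> simp [hxy]

theorem Ins.univ {β ι : Type} (b : β) : Ins b (Set.univ : Set (ι → Option β)) :=
  fun _ _ _ _ => trivial

theorem av_invol {X Y : Type} [Finite X] [Finite Y] [Nonempty Y] (e : X × Y → X × Y)
    (he : ∀ z, e (e z) = z) (f : X → ℝ) : av f = av fun x => av fun y => f (e (x, y)).1 := by
  have h1 := av_prod (fun z : X × Y => f (e z).1)
  rw [← h1]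
  have h2 := av_equiv (Function.Involutive.toPerm e he) (fun z : X × Y => f z.1)
  have h3 : (fun x => f ((Function.Involutive.toPerm e he) x).1) = fun z : X × Y => f (e z).1 := rfl
  rw [← h3, h2, av_prod]
  congr 1
  ext x
  exact (av_const (f x)).symm

theorem av_none_le {β : Type} [Finite β] [Nonempty β] :
    av (fun a : Option β => ind (a ∈ ({none} : Set (Option β)))) ≤ 1 / 2 := by
  cases nonempty_fintype β
  rw [av_ind_card, Set.ncard_singleton, Nat.card_eq_fintype_card, Fintype.card_option]
  have : 0 < Fintype.card β := Fintype.card_pos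
  have : (1 : ℝ) ≤ Fintype.card β := by exact_mod_cast this
  push_cast
  exact one_div_le_one_div_of_le (by norm_num) (by linarith)

theorem exists_half_pow (C : ℝ) {η : ℝ} (hη : 0 < η) : ∃ t : ℕ, C * (1 / 2) ^ t ≤ η := by
  obtain ⟨t, ht⟩ := exists_pow_lt_of_lt_one (x := η / (|C| + 1)) (by positivity)
    (by norm_num : (1 / 2 : ℝ) < 1)
  refine ⟨t, ?_⟩
  rw [lt_div_iff₀ (by positivity)] at ht
  have h1 := le_abs_self C
  have h2 : (0 : ℝ) < (1 / 2) ^ t := by positivity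
  nlinarith

theorem S0 {β : Type} [Finite β] [Nonempty β] (H : ∀ δ : ℝ, 0 < δ → HasN β δ) (κ : Type)
    [Finite κ] (b : β) {η : ℝ} (hη : 0 < η) : ∃ μ : Type, Finite μ ∧
      ∀ E : Set (μ → Option β), Ins b E → η ≤ av (fun x => ind (x ∈ E)) →
        ∃ W : Subspace κ (Option β) μ, ∀ x, W x ∈ E := by
  classical
  obtain ⟨N, hN, hM⟩ := mdhj H κ (η / 2) (by positivity)
  cases nonempty_fintype N
  obtain ⟨t, ht⟩ := exists_half_pow (Fintype.card N) (η := η / 2) (by positivity)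
  refine ⟨N × Fin t, inferInstance, fun E hE hd => ?_⟩
  let μ := N × Fin t
  -- resample
  have step1 : ∃ z : μ → Option β, ∃ u : μ → β, (∀ j, ∃ s, z (j, s) ≠ none) ∧
      True ∧ η / 2 ≤ av (fun u : μ → β => ind ((fun i => (z i).map fun _ => u i) ∈ E)) := by
    have h1 := av_invol (X := μ → Option β) (Y := μ → β)
      (fun z => (fun i => (z.1 i).map fun _ => z.2 i, fun i => (z.1 i).getD (z.2 i)))
      (by
        rintro ⟨z, u⟩
        simp only [Prod.mk.injEq]
        constructor <;> ext i
        · cases h : z i <;> simp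
        · cases h : z i <;> simp) (fun x => ind (x ∈ E))
    simp only at h1
    rw [h1] at hd
    have h2 : av (fun z : μ → Option β => ∑ j : N, ind (∀ s, z (j, s) = none)) ≤ η / 2 := by
      rw [av_sum]
      refine (Finset.sum_le_sum fun j _ => ?_).trans (b := ∑ j : N, (1 / 2 : ℝ) ^ t) ?_
      · have := av_pi (fun _ : μ => ({none} : Set (Option β)))
          (Finset.univ.image fun s : Fin t => (j, s)) (1 / 2) (fun i _ => av_none_le) (by norm_num)
        rw [Finset.card_image_of_injective _ (fun a b h => (Prod.mk.inj h).2)] at this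
        simpa using this
      · simpa using ht
    have h3 : η / 2 ≤ av (fun z : μ → Option β =>
        (av (fun u : μ → β => ind ((fun i => (z i).map fun _ => u i) ∈ E))) -
          ∑ j : N, ind (∀ s, z (j, s) = none)) := by
      rw [av_sub]; linarith
    obtain ⟨z, hz⟩ := exists_le_av h3
    refine ⟨z, Classical.arbitrary _, ?_, trivial, ?_⟩
    · intro j
      by_contra hc
      push Not at hc
      have h4 : (1 : ℝ) ≤ ∑ j : N, ind (∀ s, z (j, s) = none) :=
        (ind_true hc).symm.le.trans (Finset.single_le_sum
          (f := fun j => ind (∀ s, z (j, s) = none)) (fun _ _ => ind_nonneg _)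
          (Finset.mem_univ j))
      have h5 : av (fun u : μ → β => ind ((fun i => (z i).map fun _ => u i) ∈ E)) ≤ 1 :=
        av_le fun _ => ind_le_one _
      linarith
    · have : 0 ≤ ∑ j : N, ind (∀ s, z (j, s) = none) := Finset.sum_nonneg fun _ _ => ind_nonneg _
      linarith
  obtain ⟨z, -, hz, -, hu⟩ := step1
  choose s hs using hz
  have h1 := av_invol (X := μ → β) (Y := N → β)
      (fun w => (fun i => if i.2 = s i.1 then w.2 i.1 else w.1 i, fun j => w.1 (j, s j)))
      (by
        rintro ⟨u, v⟩
        simp only [Prod.mk.injEq]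
        constructor
        · ext ⟨j, s'⟩
          by_cases h : s' = s j
          · subst h; simp
          · simp [h]
        · ext j
          simp)
      (fun u : μ → β => ind ((fun i => (z i).map fun _ => u i) ∈ E))
  rw [h1] at hu
  obtain ⟨u, hu⟩ := exists_le_av hu
  obtain ⟨V, hV⟩ := hM {v | (fun i : μ => (z i).map
    fun _ => if i.2 = s i.1 then v i.1 else u i) ∈ E} hu
  refine ⟨⟨fun i => if i.2 = s i.1 then (lift V).idxFun i.1 else
    Sum.inl ((z i).map fun _ => u i), ?_⟩, fun x => ?_⟩
  · intro e
    obtain ⟨j, hj⟩ := (lift V).proper e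
    exact ⟨(j, s j), by simp [hj]⟩
  · refine hE _ _ ?_ (hV fun k => (x k).getD b)
    rintro ⟨j, s'⟩
    by_cases h : s' = s j
    · subst h
      obtain ⟨a, ha⟩ := Option.ne_none_iff_exists'.1 (hs j)
      simp only [ha, Subspace.coe_apply, lift]
      cases h : V.idxFun j <;> simp [h]
    · simp [Subspace.coe_apply, h]

theorem lemS1 {β : Type} [Finite β] [Nonempty β] (H : ∀ δ : ℝ, 0 < δ → HasN β δ) (κ : Type)
    [Finite κ] (b : β) {η : ℝ} (hη : 0 < η) (hη1 : η ≤ 1) : ∃ μ : Type, Finite μ ∧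
      ∃ R : Set (μ → Option β) → Set (μ → Option β), ∀ F, Ins b F →
        (∀ x ∈ R F, x ∈ F) ∧ (∀ g : (μ → Option β) → ℝ,
          (∀ W : Subspace κ (Option β) μ, av (fun x => g (W x)) ≤ 0) →
          av (fun x => ind (x ∈ R F) * g x) ≤ 0) ∧
        (η ≤ av (fun x => ind (x ∈ F)) →
          1 / (Nat.card (μ → Option β) : ℝ) ≤ av (fun x => ind (x ∈ R F))) := by
  classical
  obtain ⟨μ, hμ, h⟩ := S0 H κ b hη
  refine ⟨μ, hμ, ?_⟩
  suffices ∀ F : Set (μ → Option β), ∃ R : Set (μ → Option β), Ins b F →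
        (∀ x ∈ R, x ∈ F) ∧ (∀ g : (μ → Option β) → ℝ,
          (∀ W : Subspace κ (Option β) μ, av (fun x => g (W x)) ≤ 0) →
          av (fun x => ind (x ∈ R) * g x) ≤ 0) ∧
        (η ≤ av (fun x => ind (x ∈ F)) →
          1 / (Nat.card (μ → Option β) : ℝ) ≤ av (fun x => ind (x ∈ R))) by
    choose R hR using this
    exact ⟨R, hR⟩
  intro F
  by_cases hF : Ins b F ∧ η ≤ av (fun x => ind (x ∈ F))
  · obtain ⟨W, hW⟩ := h F hF.1 hF.2
    refine ⟨Set.range fun x => W x, fun _ => ⟨?_, ?_, ?_⟩⟩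
    · rintro _ ⟨x, rfl⟩
      exact hW x
    · intro g hg
      have h1 := hg W
      cases nonempty_fintype (κ → Option β)
      cases nonempty_fintype (μ → Option β)
      rw [av_eq] at h1 ⊢
      have h2 : ∑ x : κ → Option β, g (W x) ≤ 0 := by
        by_contra hc
        push Not at hc
        have : 0 < (∑ x : κ → Option β, g (W x)) / Fintype.card (κ → Option β) := by positivity
        linarith
      have h3 : ∑ x : μ → Option β, ind (x ∈ Set.range fun x => W x) * g x =
          ∑ x : κ → Option β, g (W x) := by
        rw [← Finset.sum_image (s := Finset.univ) (g := fun x => W x)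
          (fun a _ b _ h => sub_inj W h)]
        rw [← Finset.sum_subset (Finset.subset_univ (Finset.univ.image fun x => W x))]
        · apply Finset.sum_congr rfl
          intro x hx
          rw [ind_true (by simpa using hx), one_mul]
        · intro x _ hx
          rw [ind_false (by simpa using hx), zero_mul]
      rw [h3]
      exact div_nonpos_of_nonpos_of_nonneg h2 (by positivity)
    · intro _
      rw [av_ind_card]
      gcongr
      have : 0 < (Set.range fun x => W x).ncard := by
        rw [Set.ncard_pos]
        exact Set.range_nonempty _
      exact_mod_cast this
  · refine ⟨∅, fun h1 => ⟨by simp, fun g _ => ?_, fun h2 => absurd ⟨h1, h2⟩ hF⟩⟩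
    apply av_le
    intro x
    rw [ind_false (by simp), zero_mul]

theorem lemS2 {β : Type} [Finite β] [Nonempty β] (H : ∀ δ : ℝ, 0 < δ → HasN β δ) (κ : Type)
    [Finite κ] (b : β) {η : ℝ} (hη : 0 < η) (hη1 : η ≤ 1) : ∃ q : ℝ, 0 < q ∧ q ≤ 1 ∧
    ∀ t : ℕ, ∃ ι : Type, Finite ι ∧ ∀ f : (ι → Option β) → ℝ, (∀ x, f x ≤ 1) →
      (∀ W : Subspace κ (Option β) ι, av (fun x => f (W x)) ≤ 0) →
      ∀ E, Ins b E → av (fun x => ind (x ∈ E) * f x) ≤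
        2 * η + (1 - q) ^ t * av (fun x => ind (x ∈ E)) := by
  classical
  obtain ⟨μ, hμ, R, hR⟩ := lemS1 H κ b hη hη1
  have hpos : (1 : ℝ) ≤ Nat.card (μ → Option β) := by exact_mod_cast Nat.card_pos
  refine ⟨η / Nat.card (μ → Option β), by positivity, ?_, fun t => ?_⟩
  · rw [div_le_one (by linarith)]; linarith
  have hq0 : 0 < η / Nat.card (μ → Option β) := by positivity
  have hq1 : η / Nat.card (μ → Option β) ≤ 1 := by rw [div_le_one (by linarith)]; linarith
  set q := η / Nat.card (μ → Option β) with hq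
  induction t with
  | zero =>
    refine ⟨Empty, inferInstance, fun f hf _ E _ => ?_⟩
    rw [pow_zero, one_mul]
    have : av (fun x => ind (x ∈ E) * f x) ≤ av (fun x => ind (x ∈ E)) :=
      av_mono fun x => by nlinarith [ind_nonneg (x ∈ E), hf x]
    linarith
  | succ t ih =>
    obtain ⟨ι, hι, ih⟩ := ih
    refine ⟨μ ⊕ ι, inferInstance, fun f hf hW E hE => ?_⟩
    have hnn : 0 ≤ av (fun x => ind (x ∈ E)) := av_nonneg fun _ => ind_nonneg _
    by_cases hbig : 2 * η ≤ av (fun x => ind (x ∈ E))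
    swap
    · have : av (fun x => ind (x ∈ E) * f x) ≤ av (fun x => ind (x ∈ E)) :=
        av_mono fun x => by nlinarith [ind_nonneg (x ∈ E), hf x]
      have h2 : 0 ≤ (1 - q) ^ (t + 1) * av (fun x => ind (x ∈ E)) :=
        mul_nonneg (pow_nonneg (by linarith) _) hnn
      linarith
    let F : (ι → Option β) → Set (μ → Option β) := fun y => {z | Sum.elim z y ∈ E}
    have hF : ∀ y, Ins b (F y) := by
      intro y z z' hz
      apply hE
      rintro (i | i) <;> simp [hz]
    have hFF : ∀ y y', (∀ i, (y i).getD b = (y' i).getD b) → F y = F y' := by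
      intro y y' hy
      ext z
      constructor
      · apply hE; rintro (i | i) <;> simp [hy]
      · apply hE; rintro (i | i) <;> simp [hy]
    let E' : (μ → Option β) → Set (ι → Option β) := fun z => {y | z ∈ F y ∧ z ∉ R (F y)}
    have hE' : ∀ z, Ins b (E' z) := by
      intro z y y' hy
      simp only [E', Set.mem_ofPred_eq, hFF y y' hy]
      exact id
    have hsplit : ∀ z y, ind (Sum.elim z y ∈ E) = ind (y ∈ E' z) + ind (z ∈ R (F y)) := by
      intro z y
      by_cases h1 : z ∈ R (F y)
      · have h2 : Sum.elim z y ∈ E := (hR _ (hF y)).1 z h1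
        rw [ind_true h1, ind_true h2, ind_false (fun h => h.2 h1), zero_add]
      · rw [ind_false h1, add_zero]
        by_cases h2 : Sum.elim z y ∈ E
        · rw [ind_true h2, ind_true]; exact ⟨h2, h1⟩
        · rw [ind_false h2, ind_false]; exact fun h => h2 h.1
    have hsum : av (fun x => ind (x ∈ E)) = av (fun z => av fun y => ind (y ∈ E' z)) +
        av (fun y => av fun z => ind (z ∈ R (F y))) := by
      rw [av_word, av_comm (fun y z => ind (z ∈ R (F y))), ← av_add]
      congr 1; ext z
      rw [← av_add]
      congr 1; ext y
      exact hsplit z y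
    have hrem : q ≤ av (fun y => av fun z => ind (z ∈ R (F y))) := by
      have hb := hbig
      rw [av_word, av_comm] at hb
      have hm := av_markov (c := η) (d := η) (f := fun y : ι → Option β =>
        av fun z : μ → Option β => ind (Sum.elim z y ∈ E)) (fun y => av_le fun _ => ind_le_one _)
        (by linarith) hη.le
      have h1 : av (fun y : ι → Option β => (1 / (Nat.card (μ → Option β) : ℝ)) *
        ind (η ≤ av fun z : μ → Option β => ind (Sum.elim z y ∈ E))) ≤
          av (fun y => av fun z => ind (z ∈ R (F y))) := by
        apply av_mono
        intro y
        by_cases hy : η ≤ av fun z : μ → Option β => ind (Sum.elim z y ∈ E)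
        · rw [ind_true hy, mul_one]
          exact (hR _ (hF y)).2.2 hy
        · rw [ind_false hy, mul_zero]
          exact av_nonneg fun _ => ind_nonneg _
      rw [av_mul] at h1
      refine le_trans ?_ h1
      rw [hq, div_eq_mul_one_div, mul_comm]
      gcongr
    have hle1 : av (fun x => ind (x ∈ E)) ≤ 1 := av_le fun _ => ind_le_one _
    have hmain : av (fun x => ind (x ∈ E) * f x) =
        av (fun z => av fun y => ind (y ∈ E' z) * f (Sum.elim z y)) +
        av (fun y => av fun z => ind (z ∈ R (F y)) * f (Sum.elim z y)) := by
      rw [av_word, av_comm (fun y z => ind (z ∈ R (F y)) * f (Sum.elim z y)), ← av_add]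
      congr 1; ext z
      rw [← av_add]
      congr 1; ext y
      rw [hsplit]; ring
    have h1 : av (fun y => av fun z => ind (z ∈ R (F y)) * f (Sum.elim z y)) ≤ 0 := by
      apply av_le
      intro y
      apply (hR _ (hF y)).2.1
      intro W
      have := hW (hor W y)
      simpa only [hor_apply] using this
    have h2 : av (fun z => av fun y => ind (y ∈ E' z) * f (Sum.elim z y)) ≤
        2 * η + (1 - q) ^ t * av (fun z => av fun y => ind (y ∈ E' z)) := by
      rw [← av_mul]
      have : av (fun z : μ → Option β => 2 * η +
        (1 - q) ^ t * av fun y => ind (y ∈ E' z)) = 2 * η +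
          av (fun z => (1 - q) ^ t * av fun y => ind (y ∈ E' z)) := by
        rw [av_add, av_const]
      rw [← this]
      apply av_mono
      intro z
      refine ih (fun y => f (Sum.elim z y)) (fun y => hf _) (fun W => ?_) _ (hE' z)
      have := hW (ver z W)
      simpa only [ver_apply] using this
    have h3 : (1 - q) ^ t * av (fun z => av fun y => ind (y ∈ E' z)) ≤
        (1 - q) ^ (t + 1) * av (fun x => ind (x ∈ E)) := by
      rw [pow_succ, mul_assoc]
      apply mul_le_mul_of_nonneg_left _ (pow_nonneg (by linarith) _)
      nlinarith
    linarith

theorem lemS {β : Type} [Finite β] [Nonempty β] (H : ∀ δ : ℝ, 0 < δ → HasN β δ) (κ : Type)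
    [Finite κ] (b : β) {η : ℝ} (hη : 0 < η) :
    ∃ ι : Type, Finite ι ∧ ∀ f : (ι → Option β) → ℝ, ∀ τ : ℝ, 0 ≤ τ → (∀ x, f x ≤ 1) →
      (∀ W : Subspace κ (Option β) ι, av (fun x => f (W x)) ≤ τ) →
      ∀ E, Ins b E → av (fun x => ind (x ∈ E) * f x) ≤ τ + η := by
  have h0 : 0 < min (η / 3) 1 := by positivity
  obtain ⟨q, hq0, hq1, h⟩ := lemS2 H κ b h0 (min_le_right _ _)
  obtain ⟨t, ht⟩ := exists_pow_lt_of_lt_one (x := η / 3) (by positivity)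
    (by linarith : (1 - q : ℝ) < 1)
  obtain ⟨ι, hι, h⟩ := h t
  refine ⟨ι, hι, fun f τ hτ hf hW E hE => ?_⟩
  have h1 := h (fun x => f x - τ) (fun x => by linarith [hf x]) (fun W => by
    rw [av_sub, av_const]; linarith [hW W]) E hE
  have h2 : av (fun x => ind (x ∈ E) * (f x - τ)) = av (fun x => ind (x ∈ E) * f x) -
      τ * av (fun x => ind (x ∈ E)) := by
    rw [← av_mul, ← av_sub]
    congr 1; ext x; ring
  have h3 : av (fun x => ind (x ∈ E)) ≤ 1 := av_le fun _ => ind_le_one _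
  have h4 : 0 ≤ av (fun x => ind (x ∈ E)) := av_nonneg fun _ => ind_nonneg _
  have h5 : (1 - q) ^ t * av (fun x => ind (x ∈ E)) ≤ (1 - q) ^ t :=
    mul_le_of_le_one_right (pow_nonneg (by linarith) _) h3
  have h6 := min_le_left (η / 3) 1
  rw [h2] at h1
  nlinarith

theorem lemT {β : Type} [Finite β] [Nonempty β] (H : ∀ δ : ℝ, 0 < δ → HasN β δ) (κ : Type)
    [Finite κ] (s : Finset β) : ∀ η : ℝ, 0 < η →
    ∃ ι : Type, Finite ι ∧ ∀ f : (ι → Option β) → ℝ, (∀ x, f x ≤ 1) →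
      (∀ W : Subspace κ (Option β) ι, av (fun x => f (W x)) ≤ 0) →
      ∀ D : β → Set (ι → Option β), (∀ b, Ins b (D b)) → av f ≤ η ∧
        av (fun x => f x * (1 - ind (∀ b ∈ s, x ∈ D b))) ≤ η := by
  classical
  induction s using Finset.induction_on with
  | empty =>
    intro η hη
    refine ⟨κ, inferInstance, fun f hf hW D hD => ⟨?_, ?_⟩⟩
    · have := hW (idS _ _)
      simp only [idS_apply] at this
      linarith
    · simp [ind_true]
      exact (av_const _).trans_le hη.le
  | insert b s hb ih =>
    intro η hη
    obtain ⟨ι₁, hι₁, ih⟩ := ih (η / 4) (by positivity)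
    obtain ⟨ι, hι, h⟩ := lemS H ι₁ b (η := η / 4) (by positivity)
    refine ⟨ι, hι, fun f hf hW D hD => ?_⟩
    have key : ∀ W : Subspace ι₁ (Option β) ι, _ := fun W =>
      ih (fun x => f (W x)) (fun x => hf _) (fun W' => by
        have := hW (comp W W'); simpa only [comp_apply] using this)
        (fun b => {x | W x ∈ D b}) (fun b => (hD b).sub W)
    have h1 := h f (η / 4) (by positivity) hf (fun W => (key W).1)
    have h2 := h (fun x => f x * (1 - ind (∀ b ∈ s, x ∈ D b))) (η / 4) (by positivity)
      (fun x => by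
        have a1 := ind_nonneg (∀ b ∈ s, x ∈ D b)
        have a2 := ind_le_one (∀ b ∈ s, x ∈ D b)
        nlinarith [hf x]) (fun W => (key W).2) (D b) (hD b)
    constructor
    · have := h1 Set.univ (Ins.univ b)
      simp [ind_true] at this
      have h9 : av f = av fun x => f x := rfl
      linarith
    · have h3 := h1 (D b)ᶜ (hD b).compl
      have : (fun x => f x * (1 - ind (∀ b' ∈ insert b s, x ∈ D b'))) = fun x =>
          ind (x ∈ (D b)ᶜ) * f x + ind (x ∈ D b) * (f x * (1 - ind (∀ b ∈ s, x ∈ D b))) := by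
        ext x
        have : ind (∀ b' ∈ insert b s, x ∈ D b') = ind (x ∈ D b) * ind (∀ b ∈ s, x ∈ D b) := by
          rw [← ind_and]; simp
        rw [this]
        by_cases hx : x ∈ D b
        · rw [ind_true hx, ind_false (P := x ∈ (D b)ᶜ) (fun h => h hx)]; ring
        · rw [ind_false hx, ind_true (show x ∈ (D b)ᶜ from hx)]; ring
      rw [this, av_add]
      linarith

end FD

namespace FD
open Combinatorics

theorem pig {β ι Y : Type} [Finite β] [Nonempty β] [Finite ι] [Finite Y] [Nonempty Y] {d : ℝ}
    (hd : 0 < d) (h₁ : DH β ι d) (G : (ι → β) → Y → Prop)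
    (hA : 2 * d ≤ av fun u => av fun y => ind (G u y)) :
    ∃ l : Line β ι, d / (Nat.card (Line β ι) + 1) ≤ av (fun y => ind (∀ a, G (l a) y)) := by
  have : Finite (Line β ι) := Finite.of_injective Line.idxFun (fun a b h => Line.ext h)
  cases nonempty_fintype (Line β ι)
  rw [Nat.card_eq_fintype_card]
  rw [av_comm] at hA
  have hM := av_markov (c := d) (d := d)
    (fun y => av_le fun x => ind_le_one _) (by linarith) (by positivity) (f := fun y : Y =>
      av fun x : ι → β => ind (G x y))
  have hM2 : d ≤ ∑ l : Line β ι, av (fun y => ind (∀ a, G (l a) y)) := by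
    rw [← av_sum]
    refine hM.trans (av_mono fun y => ?_)
    by_cases hy : d ≤ av fun x : ι → β => ind (G x y)
    · obtain ⟨l, hl⟩ := h₁ {x | G x y} hy
      rw [ind_true hy]
      refine le_trans (ind_true (P := ∀ a, G (l a) y) hl).symm.le ?_
      exact Finset.single_le_sum (f := fun l : Line β ι => ind (∀ a, G (l a) y))
        (fun _ _ => ind_nonneg _) (Finset.mem_univ l)
    · rw [ind_false hy]
      exact Finset.sum_nonneg fun _ _ => ind_nonneg _
  by_contra hc
  push Not at hc
  have := Finset.sum_le_sum (s := Finset.univ) (fun l _ => (hc l).le)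
  simp only [Finset.sum_const, nsmul_eq_mul, Finset.card_univ] at this
  have h3 := hM2.trans this
  rw [mul_div_assoc', le_div_iff₀ (by positivity)] at h3
  nlinarith

theorem HasN.mono {α : Type} {d d' : ℝ} (h : HasN α d) (hd : d ≤ d') : HasN α d' := by
  obtain ⟨ι, hι, h⟩ := h
  exact ⟨ι, hι, fun A hA => h A (hd.trans hA)⟩

theorem single_av {X : Type} [Finite X] {g : X → ℝ} (hg : ∀ x, 0 ≤ g x) (x : X) :
    g x ≤ Nat.card X * av g := by
  cases nonempty_fintype X
  have : Nonempty X := ⟨x⟩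
  rw [av_eq, Nat.card_eq_fintype_card, mul_div_cancel₀ _ (by positivity)]
  exact Finset.single_le_sum (fun x _ => hg x) (Finset.mem_univ x)

def ptL {β ι : Type} (x : ι → Option β) (hx : ∃ j, x j = none) : Line (Option β) ι :=
  ⟨fun j => (x j).map some, by obtain ⟨j, hj⟩ := hx; exact ⟨j, by simp [hj]⟩⟩

theorem ptL_none {β ι : Type} (x : ι → Option β) (hx : ∃ j, x j = none) :
    ptL x hx none = x := by
  ext1 j
  simp only [ptL, Line.coe_apply]
  cases x j <;> simp

theorem ptL_some {β ι : Type} (x : ι → Option β) (hx : ∃ j, x j = none) (b : β) :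
    ptL x hx (some b) = fun j => some ((x j).getD b) := by
  ext1 j
  simp only [ptL, Line.coe_apply]
  cases x j <;> simp

theorem lift_r {β ι σ : Type} (V : Subspace σ β ι) (x : σ → Option β) (b : β) :
    lift V (fun j => some ((x j).getD b)) = fun i => some ((lift V x i).getD b) := by
  ext1 i
  simp only [Subspace.coe_apply, lift]
  cases V.idxFun i <;> simp

theorem av_nonone {β : Type} [Finite β] : ∃ r : ℝ, 0 ≤ r ∧ r < 1 ∧
    av (fun a : Option β => ind (a ∈ ({none}ᶜ : Set (Option β)))) ≤ r := by
  cases nonempty_fintype β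
  refine ⟨_, av_nonneg fun _ => ind_nonneg _, ?_, le_rfl⟩
  rw [av_ind_card, div_lt_one (by exact_mod_cast Nat.card_pos)]
  have := Set.ncard_compl ({none} : Set (Option β))
  rw [this, Set.ncard_singleton, Nat.card_eq_fintype_card, Fintype.card_option]
  push_cast; simp

theorem dhj_step {β : Type} [Finite β] [Nonempty β] (H : ∀ δ : ℝ, 0 < δ → HasN β δ) :
    ∀ δ : ℝ, 0 < δ → HasN (Option β) δ := by
  classical
  by_contra hcon
  push Not at hcon
  obtain ⟨δ₀, hδ₀, hno⟩ := hcon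
  have big : ∀ d : ℝ, 1 < d → HasN (Option β) d := by
    intro d hd
    refine ⟨Empty, inferInstance, fun A hA => ?_⟩
    have : av (fun x => ind (x ∈ A)) ≤ 1 := av_le fun _ => ind_le_one _
    linarith
  obtain ⟨δ, hδ, hδ1, hup, hdown⟩ : ∃ δ : ℝ, 0 < δ ∧ δ ≤ 1 ∧ (∀ d, δ < d → HasN (Option β) d) ∧
      ∀ d, d < δ → ¬ HasN (Option β) d := by
    have hb : BddAbove {d | ¬ HasN (Option β) d} := ⟨1, fun d hd => by
      by_contra hc; exact hd (big d (not_le.1 hc))⟩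
    refine ⟨sSup {d | ¬ HasN (Option β) d}, hδ₀.trans_le (le_csSup hb hno), ?_, ?_, ?_⟩
    · exact csSup_le ⟨δ₀, hno⟩ fun d hd => by
        by_contra hc; exact hd (big d (not_le.1 hc))
    · intro d hd
      by_contra hc
      exact absurd (le_csSup hb hc) (not_le.2 hd)
    · intro d hd
      obtain ⟨s, hs, hds⟩ := exists_lt_of_lt_csSup ⟨δ₀, hno⟩ hd
      exact fun h => hs (h.mono hds.le)
  obtain ⟨ι₀, hι₀, h₀⟩ := H (δ / 4) (by positivity)
  obtain ⟨θ, hθ⟩ : ∃ θ, θ = δ / 4 / (Nat.card (Line β ι₀) + 1) := ⟨_, rfl⟩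
  have hθ0 : 0 < θ := by rw [hθ]; positivity
  have hθ1 : θ ≤ 1 := by
    rw [hθ, div_le_one (by positivity)]
    have : (0 : ℝ) ≤ Nat.card (Line β ι₀) := by positivity
    linarith
  obtain ⟨m, hm⟩ : ∃ m, m = δ * θ / 16 := ⟨_, rfl⟩
  have hm0 : 0 < m := by rw [hm]; positivity
  have hm1 : m ≤ δ / 16 := by rw [hm]; nlinarith
  obtain ⟨κ, hκ, hK⟩ := hup (δ + m) (by linarith)
  cases nonempty_fintype β
  obtain ⟨ι₁, hι₁, hT⟩ := lemT H κ (Finset.univ) m hm0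
  obtain ⟨r, hr0, hr1, hr⟩ := av_nonone (β := β)
  obtain ⟨t, ht⟩ := exists_pow_lt_of_lt_one hm0 hr1
  let ι' := ι₁ ⊕ (Fin t ⊕ ι₀)
  obtain ⟨μ, hμ, hgr⟩ := gr (β := β) ι'
  have hC : (1 : ℝ) ≤ Nat.card (μ → Option β) := by exact_mod_cast Nat.card_pos
  obtain ⟨ξ, hξ⟩ : ∃ ξ, ξ = m / (2 * Nat.card (μ → Option β)) := ⟨_, rfl⟩
  have hξ0 : 0 < ξ := by rw [hξ]; positivity
  have hξ1 : 2 * Nat.card (μ → Option β) * ξ = m := by rw [hξ]; field_simp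
  obtain ⟨ν, hν, hN⟩ := hup (δ + ξ) (by linarith)
  obtain ⟨A, hA, hline⟩ : ∃ A : Set (μ ⊕ ν → Option β), δ - ξ ≤ av (fun x => ind (x ∈ A)) ∧
      ∀ l : Line (Option β) (μ ⊕ ν), ¬ ∀ a, l a ∈ A := by
    by_contra hc
    push Not at hc
    exact hdown (δ - ξ) (by linarith) ⟨μ ⊕ ν, inferInstance, hc⟩
  have noS : ∀ (τ : Type) (U : Subspace τ (Option β) μ) (y : ν → Option β)
      (l : Line (Option β) τ), ¬ ∀ a, Sum.elim (U (l a)) y ∈ A := by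
    intro τ U y l h
    refine hline ((lineIn U l).horizontal y) fun a => ?_
    rw [Line.horizontal_apply, lineIn_apply]
    exact h a
  have hfib1 : ∀ w : μ → Option β, av (fun y : ν → Option β => ind (Sum.elim w y ∈ A)) ≤ δ + ξ := by
    intro w
    by_contra hc
    obtain ⟨l, hl⟩ := hN {y | Sum.elim w y ∈ A} (not_le.1 hc).le
    refine hline (l.vertical w) fun a => ?_
    rw [Line.vertical_apply]
    exact hl a
  have hfib2 : ∀ w : μ → Option β,
      δ - m ≤ av (fun y : ν → Option β => ind (Sum.elim w y ∈ A)) := by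
    intro w
    rw [av_word] at hA
    have h1 := single_av (g := fun w : μ → Option β =>
      δ + ξ - av (fun y : ν → Option β => ind (Sum.elim w y ∈ A)))
      (fun w => by linarith [hfib1 w]) w
    rw [av_sub, av_const] at h1
    have : (Nat.card (μ → Option β) : ℝ) * (δ + ξ - av fun x : μ → Option β =>
        av fun y : ν → Option β => ind (Sum.elim x y ∈ A)) ≤ Nat.card (μ → Option β) * (2 * ξ) := by
      gcongr
      linarith
    linarith
  clear hA
  -- colouring
  obtain ⟨V, col, hcol⟩ := hgr fun w => θ ≤ av fun y : ν → Option β =>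
    ind (∀ b, Sum.elim (fun i => some ((w i).getD b)) y ∈ A)
  let b₀ : β := Classical.arbitrary β
  let c₀ : ι₁ → Option β := fun _ => some b₀
  let c₁ : Fin t → Option β := fun _ => some b₀
  have hc : col := by
    obtain ⟨l, hl⟩ := pig (Y := ν → Option β) (by positivity) h₀
      (fun u y => Sum.elim (lift V (Sum.elim c₀ (Sum.elim c₁ (some ∘ u)))) y ∈ A) (by
        apply le_av
        intro u
        refine le_trans ?_ (hfib2 _)
        linarith)
    rw [← hcol (Sum.elim c₀ (Sum.elim c₁ l.idxFun)) (by
      obtain ⟨j, hj⟩ := l.proper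
      exact ⟨Sum.inr (Sum.inr j), hj⟩)]
    rw [hθ]
    refine hl.trans_eq ?_
    congr 1; ext y; congr 1
    apply propext
    apply forall_congr'
    intro b
    rw [← lift_r]
    have : (fun j => some (((Sum.elim c₀ (Sum.elim c₁ l.idxFun) : ι' → Option β) j).getD b)) =
        Sum.elim c₀ (Sum.elim c₁ (some ∘ ⇑l b)) := by
      ext1 j
      rcases j with j | j | j
      · simp [c₀]
      · simp [c₁]
      · simp [Line.coe_apply]
    rw [this]
  have hgood : ∀ x : ι' → Option β, (∃ j, x j = none) → θ ≤ av fun y : ν → Option β =>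
      ind (∀ b, Sum.elim (lift V fun j => some ((x j).getD b)) y ∈ A) := by
    intro x hx
    have := (hcol x hx).2 hc
    simpa only [lift_r] using this
  let D : (ν → Option β) → β → Set (ι' → Option β) := fun y b =>
    {x | Sum.elim (lift V fun j => some ((x j).getD b)) y ∈ A}
  let f : (ν → Option β) → (ι' → Option β) → ℝ := fun y x =>
    ind (Sum.elim (lift V x) y ∈ A) - (δ + m)
  have e1 : ∀ y, av (fun x => f y x * (1 - ind (∀ b, x ∈ D y b))) ≤ m := by
    intro y
    rw [av_word, av_comm]
    apply av_le
    intro z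
    have := (hT (fun x => f y (Sum.elim x z)) ?_ ?_ (fun b => {x | Sum.elim x z ∈ D y b}) ?_).2
    · simpa using this
    · intro x
      have := ind_le_one (Sum.elim (lift V (Sum.elim x z)) y ∈ A)
      simp only [f]; linarith
    · intro W
      simp only [f]
      rw [av_sub, av_const]
      by_contra hc2
      obtain ⟨l, hl⟩ := hK {x | Sum.elim (lift V (Sum.elim (W x) z)) y ∈ A} (by
        show δ + m ≤ av (fun x => ind (Sum.elim (lift V (Sum.elim (W x) z)) y ∈ A))
        linarith [not_le.1 hc2])
      refine noS κ (comp (lift V) (hor W z)) y l fun a => ?_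
      rw [comp_apply, hor_apply]
      exact hl a
    · intro b x x' hx
      show Sum.elim (lift V fun j => some (((Sum.elim x z : ι' → Option β) j).getD b)) y ∈ A →
        Sum.elim (lift V fun j => some (((Sum.elim x' z : ι' → Option β) j).getD b)) y ∈ A
      have : (fun j => some (((Sum.elim x z : ι' → Option β) j).getD b)) =
          fun j => some (((Sum.elim x' z : ι' → Option β) j).getD b) := by
        ext1 j
        rcases j with j | j
        · simp [hx]
        · simp
      rw [this]; exact id
  have e2 : av (fun x : ι' → Option β => ind (∀ j, x j ≠ none)) ≤ m := by
    have := av_pi (fun _ : ι' => ({none}ᶜ : Set (Option β)))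
      (Finset.univ.map ⟨fun s : Fin t => (Sum.inr (Sum.inl s) : ι'), fun a b h => Sum.inl.inj (Sum.inr.inj h)⟩)
      r (fun i _ => hr) hr0
    rw [Finset.card_map, Finset.card_univ, Fintype.card_fin] at this
    refine (av_mono fun x => ind_mono fun h => ?_).trans (this.trans ht.le)
    intro i _
    exact h i
  have e3 : ∀ y x, f y x ≤ f y x * (1 - ind (∀ b, x ∈ D y b)) + ind (∀ j, x j ≠ none)
      - (δ + m) * ind (∀ b, x ∈ D y b) := by
    intro y x
    by_cases hD : ∀ b, x ∈ D y b
    · rw [ind_true hD]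
      by_cases hx : ∀ j, x j ≠ none
      · rw [ind_true hx]
        have := ind_le_one (Sum.elim (lift V x) y ∈ A)
        simp only [f]; linarith
      · rw [ind_false hx]
        push Not at hx
        have : Sum.elim (lift V x) y ∉ A := by
          intro hxA
          refine noS ι' (lift V) y (ptL x hx) fun a => ?_
          cases a with
          | none => rw [ptL_none]; exact hxA
          | some b => rw [ptL_some]; exact hD b
        simp only [f, ind_false this]; linarith
    · rw [ind_false hD]
      have := ind_nonneg (∀ j, x j ≠ none)
      linarith
  have e4 : av (fun y => av (fun x => f y x)) ≤ 2 * m -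
      (δ + m) * av (fun y => av fun x => ind (∀ b, x ∈ D y b)) := by
    have h1 : ∀ y, av (fun x => f y x) ≤ 2 * m - (δ + m) * av fun x => ind (∀ b, x ∈ D y b) := by
      intro y
      refine (av_mono (e3 y)).trans ?_
      rw [av_sub, av_add, av_mul]
      linarith [e1 y]
    refine (av_mono h1).trans_eq ?_
    rw [av_sub, av_const, av_mul]
  have e5 : θ / 2 ≤ av (fun y => av fun x => ind (∀ b, x ∈ D y b)) := by
    rw [av_comm]
    have : av (fun x : ι' → Option β => θ * (1 - ind (∀ j, x j ≠ none))) ≤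
        av (fun x => av fun y => ind (∀ b, x ∈ D y b)) := by
      apply av_mono
      intro x
      by_cases hx : ∀ j, x j ≠ none
      · rw [ind_true hx, sub_self, mul_zero]
        exact av_nonneg fun _ => ind_nonneg _
      · rw [ind_false hx, sub_zero, mul_one]
        push Not at hx
        exact hgood x hx
    rw [av_mul, av_sub, av_const] at this
    nlinarith
  have e6 : -(2 * m) ≤ av (fun y => av (fun x => f y x)) := by
    rw [av_comm]
    apply le_av
    intro x
    simp only [f]
    rw [av_sub, av_const]
    linarith [hfib2 (lift V x)]
  nlinarith

theorem dhj (α : Type) [Finite α] : Nonempty α → ∀ δ : ℝ, 0 < δ → HasN α δ := by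
  induction α using Finite.induction_empty_option with
  | of_equiv e ih =>
    rename_i α β
    intro hne δ hδ
    obtain ⟨ι, hι, h⟩ := ih (e.nonempty_congr.2 hne) δ hδ
    refine ⟨ι, hι, fun A hA => ?_⟩
    obtain ⟨l, hl⟩ := h {x | e ∘ x ∈ A} (by
      refine hA.trans_eq ?_
      exact (av_equiv (Equiv.arrowCongr (Equiv.refl ι) e) (fun x => ind (x ∈ A))).symm)
    refine ⟨l.map e, fun a => ?_⟩
    have := hl (e.symm a)
    obtain ⟨b, rfl⟩ := e.surjective a
    rw [Line.map_apply]
    simpa using this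
  | h_empty => intro h; exact h.elim (fun x => x.elim)
  | h_option ih =>
    rename_i β _
    intro _
    by_cases hβ : Nonempty β
    · exact dhj_step (ih hβ)
    · have : IsEmpty β := not_nonempty_iff.1 hβ
      intro δ hδ
      refine ⟨Unit, inferInstance, fun A hA => ?_⟩
      obtain ⟨x, hx⟩ := exists_le_av hA
      have hxA : x ∈ A := by
        by_contra hc
        rw [ind_false hc] at hx; linarith
      refine ⟨⟨fun _ => none, ⟨(), rfl⟩⟩, fun a => ?_⟩
      convert hxA
      exact Subsingleton.elim _ _

end FD

namespace FD
open Combinatorics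

noncomputable def Phi {p n : ℕ} (z : Fin n → ZMod p) (B : Set (Fin n → ZMod p)) : ℝ :=
  av fun x : Fin n → ZMod p => ind (∀ a : ZMod p, x + a • z ∈ B)

theorem av_shift {G : Type} [AddGroup G] (f : G → ℝ) (c : G) : av (fun x => f (x + c)) = av f :=
  av_equiv (Equiv.addRight c) f

theorem varn (p : ℕ) [Fact p.Prime] {ε : ℝ} (hε : 0 < ε) : ∃ κ : ℝ, 0 < κ ∧ ∃ n1 : ℕ, 0 < n1 ∧
    ∀ n : ℕ, n1 ≤ n → ∀ B : Set (Fin n → ZMod p), ε ≤ av (fun x => ind (x ∈ B)) →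
      κ ≤ av fun z : {v : Fin n → ZMod p // v ≠ 0} => Phi z.1 B := by
  classical
  obtain ⟨ι, hι, hd⟩ := dhj (ZMod p) inferInstance (ε / 2) (by positivity)
  cases nonempty_fintype ι
  obtain ⟨κ, hκ⟩ : ∃ κ, κ = ε / 2 / (Nat.card (Line (ZMod p) ι) + 1) / 2 := ⟨_, rfl⟩
  have hκ0 : 0 < κ := by rw [hκ]; positivity
  obtain ⟨n0, hn0⟩ := exists_pow_lt_of_lt_one hκ0 (by norm_num : (1 / 2 : ℝ) < 1)
  refine ⟨κ, hκ0, n0 + 1, by omega, fun n hn B hB => ?_⟩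
  let V := Fin n → ZMod p
  obtain ⟨l, hl⟩ := pig (Y := V × (ι → V)) (by positivity) hd
    (fun u y => y.1 + ∑ i, u i • y.2 i ∈ B) (by
      apply le_av
      intro u
      rw [av_prod, av_comm]
      apply le_av
      intro v
      have := av_shift (fun x : V => ind (x ∈ B)) (∑ i, u i • v i)
      simp only
      rw [this]
      linarith)
  let Ψ : V → V → ℝ := fun x z => ind (∀ a : ZMod p, x + a • z ∈ B)
  let h : (ι → V) → V := fun v => ∑ i, if l.idxFun i = none then v i else 0
  let g : (ι → V) → V := fun v => ∑ i, (l 0 i) • v i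
  have hline : ∀ a (v : ι → V), ∑ i, (l a i) • v i = g v + a • h v := by
    intro a v
    simp only [g, h]
    rw [Finset.smul_sum, ← Finset.sum_add_distrib]
    apply Finset.sum_congr rfl
    intro i _
    simp only [Line.coe_apply]
    cases l.idxFun i <;> simp
  rw [av_prod, av_comm] at hl
  have h1 : ∀ v : ι → V, (av fun b : V => ind (∀ a, b + ∑ i, (l a i) • v i ∈ B)) =
      Phi (h v) B := by
    intro v
    rw [Phi, ← av_shift (fun x : V => ind (∀ a : ZMod p, x + a • h v ∈ B)) (g v)]
    congr 1; ext b
    simp only [hline, add_assoc]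
  have h2 : (av fun v : ι → V => Phi (h v) B) = av fun z : V => Phi z B := by
    obtain ⟨i0, hi0⟩ := l.proper
    have h3 : ∀ w : V, (av fun v : ι → V => Phi (h v) B) = av fun v : ι → V => Phi (w + h v) B := by
      intro w
      rw [← av_shift (fun v : ι → V => Phi (h v) B) (Pi.single i0 w)]
      congr 1; ext v
      congr 1
      simp only [h, Pi.add_apply]
      have : ∀ i, (if l.idxFun i = none then v i + (Pi.single i0 w : ι → V) i else 0) =
        (if l.idxFun i = none then v i else 0) + (if i = i0 then w else 0) := by
        intro i
        by_cases hi : i = i0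
        · subst hi; simp [hi0]
        · simp [hi]
      simp only [this]
      rw [Finset.sum_add_distrib]
      simp [add_comm]
    calc _ = av (fun w : V => av fun v : ι → V => Phi (h v) B) := (av_const _).symm
      _ = av (fun w : V => av fun v : ι → V => Phi (w + h v) B) := by
        congr 1; ext w; exact h3 w
      _ = av (fun v : ι → V => av fun w : V => Phi (w + h v) B) := av_comm _
      _ = av (fun v : ι → V => av fun w : V => Phi w B) := by
        congr 1; ext v; exact av_shift (fun z : V => Phi z B) _
      _ = _ := av_const _
  simp only [h1] at hl
  rw [h2] at hl
  have hP0 : ∀ z : V, 0 ≤ Phi z B := fun z => av_nonneg fun _ => ind_nonneg _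
  have hP1 : ∀ z : V, Phi z B ≤ 1 := fun z => av_le fun _ => ind_le_one _
  rw [av_eq] at hl ⊢
  have hsum : ∑ z : V, Phi z B = Phi (0 : V) B + ∑ z : {v : V // v ≠ 0}, Phi z.1 B := by
    rw [← Fintype.sum_subtype_add_sum_subtype (fun v : V => v = 0)]
    have h0 : ∑ z : {v : V // v = 0}, Phi z.1 B = Phi (0 : V) B := by
      rw [Fintype.sum_eq_single (⟨0, rfl⟩ : {v : V // v = 0})]
      rintro ⟨x, hx⟩ hne
      exact (hne (Subtype.ext hx)).elim
    rw [← h0]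
    congr!
  have hcard : (Fintype.card V : ℝ) = (p : ℝ) ^ n := by simp [V, ZMod.card]
  have hp2 : (2 : ℝ) ≤ p := by exact_mod_cast (Fact.out : p.Prime).two_le
  have : Nonempty {v : V // v ≠ 0} := by
    refine ⟨⟨fun _ => 1, fun h => ?_⟩⟩
    have := congrFun h ⟨0, by omega⟩
    exact one_ne_zero this
  have hcs : (0 : ℝ) < Fintype.card {v : V // v ≠ 0} := by positivity
  have hcs2 : (Fintype.card {v : V // v ≠ 0} : ℝ) ≤ Fintype.card V := by
    exact_mod_cast Fintype.card_subtype_le _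
  have hS : 0 ≤ ∑ z : {v : V // v ≠ 0}, Phi z.1 B := Finset.sum_nonneg fun z _ => hP0 _
  have k1 : (∑ z : {v : V // v ≠ 0}, Phi z.1 B) / Fintype.card V ≤
    (∑ z : {v : V // v ≠ 0}, Phi z.1 B) / Fintype.card {v : V // v ≠ 0} :=
    div_le_div_of_nonneg_left hS hcs hcs2
  have k2 : Phi (0 : V) B / Fintype.card V ≤ κ := by
    calc Phi (0 : V) B / Fintype.card V ≤ 1 / 2 ^ n := by
          rw [hcard]
          gcongr
          exact hP1 _
      _ = (1 / 2) ^ n := by rw [one_div_pow]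
      _ ≤ (1 / 2) ^ n0 := pow_le_pow_of_le_one (by norm_num) (by norm_num) (by omega)
      _ ≤ κ := hn0.le
  rw [hsum, add_div] at hl
  have : ε / 2 / (Nat.card (Line (ZMod p) ι) + 1) = 2 * κ := by rw [hκ]; ring
  rw [this] at hl
  linarith

end FD

namespace FD

noncomputable def sgn (b : Bool) : ℝ := if b then 1 else -1

theorem av_marg {Z : Type} [Finite Z] [Nonempty Z] {k : ℕ} (i : Fin k) (f : Z → ℝ) :
    av (fun w : Fin k → Z => f (w i)) = av f := by
  classical
  have := av_invol (X := Fin k → Z) (Y := Z) (fun w => (Function.update w.1 i w.2, w.1 i))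
    (by rintro ⟨w, y⟩; simp) (fun w => f (w i))
  rw [this]
  simp only [Function.update_self]
  exact av_const _

theorem symmetrize {Z 𝓑 : Type} [Finite Z] [Nonempty Z] (Φ : Z → 𝓑 → ℝ) (k : ℕ)
    (B : (Fin k → Z) → 𝓑) (c : ℝ)
    (h : c ≤ av fun z : Fin k → Z => ∑ i, ((av fun w => Φ w (B z)) - Φ (z i) (B z))) :
    ∃ (z : Fin k → Z) (S : (Fin k → Bool) → 𝓑),
      c / 2 ≤ av fun σ : Fin k → Bool => ∑ i, sgn (σ i) * Φ (z i) (S σ) := by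
  classical
  have h1 : c ≤ av fun q : (Fin k → Z) × (Fin k → Z) =>
      ∑ i, (Φ (q.2 i) (B q.1) - Φ (q.1 i) (B q.1)) := by
    rw [av_prod]
    refine h.trans_eq ?_
    congr 1; ext z
    rw [av_sum]
    apply Finset.sum_congr rfl
    intro i _
    simp only
    rw [av_sub, av_marg i (fun w => Φ w (B z)), av_const]
  let sw : (Fin k → Bool) → (Fin k → Z) × (Fin k → Z) → (Fin k → Z) × (Fin k → Z) := fun σ q =>
    (fun i => if σ i then q.1 i else q.2 i, fun i => if σ i then q.2 i else q.1 i)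
  have hsw : ∀ σ, Function.Involutive (sw σ) := by
    rintro σ ⟨z, w⟩
    simp only [sw, Prod.mk.injEq]
    constructor <;> ext i <;> cases σ i <;> simp
  have h2 : c ≤ av fun q : (Fin k → Z) × (Fin k → Z) => av fun σ : Fin k → Bool =>
      ∑ i, sgn (σ i) * (Φ (q.2 i) (B (sw σ q).1) - Φ (q.1 i) (B (sw σ q).1)) := by
    rw [av_comm]
    apply le_av
    intro σ
    rw [← av_equiv (hsw σ).toPerm] at h1
    refine h1.trans_eq ?_
    congr 1; ext q
    apply Finset.sum_congr rfl
    intro i _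
    simp only [Function.Involutive.coe_toPerm]
    have e1 : (sw σ q).2 i = if σ i then q.2 i else q.1 i := rfl
    have e2 : (sw σ q).1 i = if σ i then q.1 i else q.2 i := rfl
    rw [e1, e2]
    cases σ i <;> simp [sgn]
  obtain ⟨q, hq⟩ := exists_le_av h2
  simp only [mul_sub, Finset.sum_sub_distrib] at hq
  rw [av_sub] at hq
  by_cases hc : c / 2 ≤ av fun σ : Fin k → Bool => ∑ i, sgn (σ i) * Φ (q.2 i) (B (sw σ q).1)
  · exact ⟨q.2, fun σ => B (sw σ q).1, hc⟩
  · refine ⟨q.1, fun σ => B (sw (fun i => !σ i) q).1, ?_⟩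
    have h3 := av_equiv (Equiv.arrowCongr (Equiv.refl (Fin k)) Equiv.boolNot)
      (fun σ : Fin k → Bool => ∑ i, sgn (σ i) * Φ (q.1 i) (B (sw σ q).1))
    have h4 : (fun σ : Fin k → Bool => ∑ i, sgn (σ i) * Φ (q.1 i) (B (sw (fun i => !σ i) q).1)) =
      fun σ => (-1) * (fun σ : Fin k → Bool => ∑ i, sgn (σ i) * Φ (q.1 i) (B (sw σ q).1))
        (Equiv.arrowCongr (Equiv.refl (Fin k)) Equiv.boolNot σ) := by
      ext σ
      have : (Equiv.arrowCongr (Equiv.refl (Fin k)) Equiv.boolNot σ) = fun i => !σ i := rfl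
      rw [this, Finset.mul_sum]
      apply Finset.sum_congr rfl
      intro i _
      have hs : ∀ b, sgn b = -sgn (!b) := by intro b; cases b <;> simp [sgn]
      rw [hs (σ i)]; ring
    rw [h4, av_mul, h3]
    linarith

theorem av_prod_pi {ι α : Type} [Fintype ι] [Finite α] (g : ι → α → ℝ) :
    av (fun x : ι → α => ∏ i, g i (x i)) = ∏ i, av (g i) := by
  classical
  cases nonempty_fintype α
  simp only [av_eq]
  rw [Finset.prod_div_distrib, Finset.prod_univ_sum]
  simp

theorem chern {k : ℕ} (P : Finset (Fin k)) {t : ℝ} (ht : 0 ≤ t) :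
    av (fun σ : Fin k → Bool => ind (t * k ≤ ∑ i ∈ P, sgn (σ i))) ≤ Real.exp (-(t ^ 2 * k / 2)) := by
  classical
  have h1 : ∀ σ : Fin k → Bool, ind (t * k ≤ ∑ i ∈ P, sgn (σ i)) ≤ Real.exp (-(t ^ 2 * k)) *
      ∏ i, Real.exp (if i ∈ P then t * sgn (σ i) else 0) := by
    intro σ
    rw [← Real.exp_sum, ← Real.exp_add, Finset.sum_ite_mem, Finset.univ_inter, ← Finset.mul_sum]
    by_cases h : t * k ≤ ∑ i ∈ P, sgn (σ i)
    · rw [ind_true h]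
      apply Real.one_le_exp
      nlinarith
    · rw [ind_false h]; positivity
  refine (av_mono h1).trans ?_
  rw [av_mul, av_prod_pi (fun i b => Real.exp (if i ∈ P then t * sgn b else 0))]
  have h2 : ∀ i : Fin k, av (fun b => Real.exp (if i ∈ P then t * sgn b else 0)) ≤
      Real.exp (t ^ 2 / 2) := by
    intro i
    by_cases hi : i ∈ P
    · simp only [hi, if_true]
      rw [av_eq]
      have := Real.cosh_le_exp_half_sq t
      rw [Real.cosh_eq] at this
      simpa [sgn] using this
    · simp only [hi, if_false, Real.exp_zero]
      rw [av_const]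
      apply Real.one_le_exp; positivity
  calc _ ≤ Real.exp (-(t ^ 2 * k)) * ∏ _i : Fin k, Real.exp (t ^ 2 / 2) := by
        gcongr with i
        · intro i _; exact av_nonneg fun _ => (Real.exp_pos _).le
        · exact h2 i
    _ = _ := by
        rw [Finset.prod_const, Finset.card_univ, Fintype.card_fin, ← Real.exp_nat_mul,
          ← Real.exp_add]
        congr 1; ring

theorem small_sets {ζ : ℝ} (hζ : 0 < ζ) (hζ1 : ζ ≤ 1) : ∃ M : ℕ, 0 < M ∧ ∀ k : ℕ,
    ((Finset.univ.filter fun S : Finset (Fin k) => S.card ≤ k / M).card : ℝ) ≤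
      Real.exp (ζ * k) := by
  obtain ⟨L, hL⟩ : ∃ L, L = Real.log (2 / ζ) := ⟨_, rfl⟩
  have hL0 : 0 ≤ L := by rw [hL]; apply Real.log_nonneg; rw [le_div_iff₀ hζ]; linarith
  have hLe : Real.exp (-L) = ζ / 2 := by
    rw [Real.exp_neg, hL, Real.exp_log (by positivity), inv_div]
  obtain ⟨M, hM⟩ := exists_nat_gt (2 * L / ζ)
  have hM0 : (0 : ℝ) < M := lt_of_le_of_lt (by positivity) hM
  refine ⟨M, by exact_mod_cast hM0, fun k => ?_⟩
  set 𝓢 := Finset.univ.filter fun S : Finset (Fin k) => S.card ≤ k / M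
  have hd : ((k / M : ℕ) : ℝ) ≤ k / M := Nat.cast_div_le
  have h1 : (𝓢.card : ℝ) * Real.exp (-L * (k / M : ℕ)) ≤ Real.exp (ζ / 2 * k) := by
    calc (𝓢.card : ℝ) * Real.exp (-L * (k / M : ℕ)) = ∑ S ∈ 𝓢, Real.exp (-L * (k / M : ℕ)) := by
          simp
      _ ≤ ∑ S ∈ 𝓢, (ζ / 2) ^ S.card := by
          apply Finset.sum_le_sum
          intro S hS
          have hS' : S.card ≤ k / M := (Finset.mem_filter.1 hS).2
          rw [← hLe, ← Real.exp_nat_mul]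
          apply Real.exp_le_exp.2
          have : (S.card : ℝ) ≤ (k / M : ℕ) := by exact_mod_cast hS'
          nlinarith
      _ ≤ ∑ S : Finset (Fin k), (ζ / 2) ^ S.card :=
          Finset.sum_le_sum_of_subset_of_nonneg (Finset.subset_univ _) (fun _ _ _ => by positivity)
      _ = (1 + ζ / 2) ^ k := by
          have := Finset.sum_pow_mul_eq_add_pow (ζ / 2) 1 (Finset.univ : Finset (Fin k))
          simp only [one_pow, mul_one, Finset.powerset_univ, Finset.card_univ, Fintype.card_fin] at this
          rw [this, add_comm]
      _ ≤ Real.exp (ζ / 2) ^ k := by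
          gcongr
          linarith [Real.add_one_le_exp (ζ / 2)]
      _ = _ := by rw [← Real.exp_nat_mul, mul_comm]
  have h2 : L * (k / M : ℕ) ≤ ζ / 2 * k := by
    rw [div_lt_iff₀ hζ] at hM
    have hk : (0 : ℝ) ≤ k := by positivity
    calc L * (k / M : ℕ) ≤ L * (k / M) := by gcongr
      _ = (L / M) * k := by ring
      _ ≤ ζ / 2 * k := by
        apply mul_le_mul_of_nonneg_right _ hk
        rw [div_le_iff₀ hM0]
        linarith
  have h3 : (𝓢.card : ℝ) ≤ Real.exp (ζ / 2 * k) * Real.exp (L * (k / M : ℕ)) := by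
    have : (𝓢.card : ℝ) = 𝓢.card * Real.exp (-L * (k / M : ℕ)) * Real.exp (L * (k / M : ℕ)) := by
      rw [mul_assoc, ← Real.exp_add]; simp
    rw [this]
    gcongr
  refine h3.trans ?_
  rw [← Real.exp_add]
  apply Real.exp_le_exp.2
  linarith

end FD

namespace FD

theorem round_u {Q : ℕ} (hQ : 0 < Q) {a : ℝ} (h0 : 0 ≤ a) (h1 : a ≤ 1) :
    a - 1 / Q ≤ av (fun s : Fin Q => ind (((s : ℕ) + 1 : ℝ) ≤ a * Q)) ∧
    av (fun s : Fin Q => ind (((s : ℕ) + 1 : ℝ) ≤ a * Q)) ≤ a := by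
  classical
  have hQ' : (0 : ℝ) < Q := by exact_mod_cast hQ
  have hle : ⌊a * Q⌋₊ ≤ Q := by
    apply Nat.floor_le_of_le
    nlinarith
  have key : av (fun s : Fin Q => ind (((s : ℕ) + 1 : ℝ) ≤ a * Q)) = ⌊a * Q⌋₊ / Q := by
    have := av_ind_card {s : Fin Q | ((s : ℕ) + 1 : ℝ) ≤ a * Q}
    simp only [Set.mem_ofPred_eq] at this
    rw [this]
    congr 2
    · have : {s : Fin Q | ((s : ℕ) + 1 : ℝ) ≤ a * Q} = {s : Fin Q | (s : ℕ) < ⌊a * Q⌋₊} := by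
        ext s
        simp only [Set.mem_ofPred_eq]
        rw [← Nat.succ_le_iff, Nat.le_floor_iff (by positivity)]
        push_cast; rfl
      rw [this, Set.ncard_eq_toFinset_card']
      have h2 : ({s : Fin Q | (s : ℕ) < ⌊a * Q⌋₊} : Set (Fin Q)).toFinset =
        Finset.univ.filter fun s : Fin Q => (s : ℕ) < ⌊a * Q⌋₊ := by ext; simp
      rw [h2, Fin.card_filter_val_lt, min_eq_right hle]
    · simp
  rw [key]
  constructor
  · have := Nat.lt_floor_add_one (a * Q)
    rw [le_div_iff₀ hQ', sub_mul, one_div, inv_mul_cancel₀ hQ'.ne']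
    linarith
  · rw [div_le_iff₀ hQ']
    exact Nat.floor_le (by positivity)

theorem round_star {Q : ℕ} {a : ℝ} :
    av (fun s : Fin Q => ind (((s : ℕ) : ℝ) < a * Q ∧ a * Q < (s : ℕ) + 1)) ≤ 1 / Q := by
  have := av_ind_card {s : Fin Q | ((s : ℕ) : ℝ) < a * Q ∧ a * Q < (s : ℕ) + 1}
  simp only [Set.mem_ofPred_eq] at this
  rw [this]
  simp only [Nat.card_eq_fintype_card, Fintype.card_fin]
  gcongr
  have : {s : Fin Q | ((s : ℕ) : ℝ) < a * Q ∧ a * Q < (s : ℕ) + 1}.ncard ≤ 1 := by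
    rw [Set.ncard_le_one_iff]
    rintro s s' ⟨h1, h2⟩ ⟨h3, h4⟩
    have h5 : ((s : ℕ) : ℝ) < (s' : ℕ) + 1 := h1.trans h4
    have h6 : ((s' : ℕ) : ℝ) < (s : ℕ) + 1 := h3.trans h2
    have h5' : (s : ℕ) < s' + 1 := by exact_mod_cast h5
    have h6' : (s' : ℕ) < s + 1 := by exact_mod_cast h6
    exact Fin.ext (by omega)
  exact_mod_cast this

theorem shat {c : ℝ} (hc : 0 < c) (hc1 : c ≤ 1) : ∃ Q M k0 : ℕ, 0 < Q ∧ 0 < M ∧ ∀ k : ℕ, k0 ≤ k →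
    ∀ a : Fin k → (Fin k → Bool) → ℝ, (∀ i σ, 0 ≤ a i σ ∧ a i σ ≤ 1) →
    c * k ≤ av (fun σ => ∑ i, sgn (σ i) * a i σ) →
    ∃ I : Finset (Fin k), (k : ℝ) / M ≤ I.card ∧ ∃ m : Fin k → ℝ, (∀ i, 0 ≤ m i ∧ m i ≤ 1) ∧
      ∀ x : Fin k → Bool, ∃ σ, ∀ i ∈ I, (x i = true → m i + 1 / (2 * Q) ≤ a i σ) ∧
        (x i = false → a i σ ≤ m i - 1 / (2 * Q)) := by
  classical
  obtain ⟨ζ, hζ⟩ : ∃ ζ, ζ = (c / 4) ^ 2 / 8 := ⟨_, rfl⟩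
  have hζ0 : 0 < ζ := by rw [hζ]; positivity
  have hζ1 : ζ ≤ 1 := by rw [hζ]; nlinarith
  obtain ⟨M, hM, hsmall⟩ := small_sets hζ0 hζ1
  obtain ⟨Q, hQ⟩ := exists_nat_gt ((1 + M) / (c / 2))
  have hQ0 : (0 : ℝ) < Q := lt_of_le_of_lt (by positivity) hQ
  have hQn : 0 < Q := by exact_mod_cast hQ0
  rw [div_lt_iff₀ (by positivity)] at hQ
  obtain ⟨k0, hk0⟩ := exists_nat_gt (4 / c / (2 * ζ))
  rw [div_lt_iff₀ (by positivity)] at hk0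
  have hM' : (0 : ℝ) < M := by exact_mod_cast hM
  refine ⟨Q, M, k0 + 1, hQn, hM, fun k hk a ha hav => ?_⟩
  have hkpos : (0 : ℝ) < k := by exact_mod_cast (by omega : 0 < k)
  have hkk : (k0 : ℝ) ≤ k := by exact_mod_cast (by omega : k0 ≤ k)
  haveI : Nonempty (Fin Q) := ⟨⟨0, hQn⟩⟩
  -- choose thresholds
  let U : (Fin k → Fin Q) → Fin k → (Fin k → Bool) → Prop := fun s i σ =>
    (((s i : ℕ) + 1 : ℝ) ≤ a i σ * Q)
  let St : (Fin k → Fin Q) → Fin k → (Fin k → Bool) → Prop := fun s i σ =>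
    (((s i : ℕ) : ℝ) < a i σ * Q ∧ a i σ * Q < (s i : ℕ) + 1)
  have h1 : c / 2 * k ≤ av fun s : Fin k → Fin Q => av fun σ : Fin k → Bool =>
      ∑ i, (sgn (σ i) * ind (U s i σ) - M * ind (St s i σ)) := by
    rw [av_comm]
    have h2 : ∀ σ : Fin k → Bool, (∑ i, sgn (σ i) * a i σ) - c / 2 * k ≤
        av fun s : Fin k → Fin Q => ∑ i, (sgn (σ i) * ind (U s i σ) - M * ind (St s i σ)) := by
      intro σ
      rw [av_sum]
      have : (∑ i, sgn (σ i) * a i σ) - c / 2 * k = ∑ i, (sgn (σ i) * a i σ - c / 2) := by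
        rw [Finset.sum_sub_distrib]; simp; ring
      rw [this]
      apply Finset.sum_le_sum
      intro i _
      rw [av_sub, av_mul, av_mul]
      have e1 : (av fun s : Fin k → Fin Q => ind (U s i σ)) =
        av (fun s : Fin Q => ind (((s : ℕ) + 1 : ℝ) ≤ a i σ * Q)) :=
        av_marg i (fun s : Fin Q => ind (((s : ℕ) + 1 : ℝ) ≤ a i σ * Q))
      have e2 : (av fun s : Fin k → Fin Q => ind (St s i σ)) =
        av (fun s : Fin Q => ind (((s : ℕ) : ℝ) < a i σ * Q ∧ a i σ * Q < (s : ℕ) + 1)) :=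
        av_marg i (fun s : Fin Q => ind (((s : ℕ) : ℝ) < a i σ * Q ∧ a i σ * Q < (s : ℕ) + 1))
      rw [e1, e2]
      obtain ⟨r1, r2⟩ := round_u hQn (ha i σ).1 (ha i σ).2
      have r3 := round_star (Q := Q) (a := a i σ)
      have r4 : (M : ℝ) * av (fun s : Fin Q => ind (((s : ℕ) : ℝ) < a i σ * Q ∧
        a i σ * Q < (s : ℕ) + 1)) ≤ M * (1 / Q) := by gcongr
      have r5 : 1 / (Q : ℝ) + M * (1 / Q) ≤ c / 2 := by
        rw [mul_one_div, ← add_div, div_le_iff₀ hQ0]; linarith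
      have r6 : (0 : ℝ) ≤ 1 / Q := by positivity
      cases σ i
      · simp only [sgn]; norm_num; norm_num at r1 r2 r4 r5 r6; linarith
      · simp only [sgn]; norm_num; norm_num at r1 r2 r4 r5 r6; linarith
    have h3 := av_mono h2
    rw [av_sub, av_const] at h3
    linarith
  obtain ⟨s, hs⟩ := exists_le_av h1
  let P : (Fin k → Bool) → Finset (Fin k) := fun σ => Finset.univ.filter fun i => U s i σ
  let T : (Fin k → Bool) → Finset (Fin k) := fun σ => Finset.univ.filter fun i => St s i σ
  have hX : ∀ σ : Fin k → Bool, ∑ i, (sgn (σ i) * ind (U s i σ) - M * ind (St s i σ)) =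
      ∑ i ∈ P σ, sgn (σ i) - M * (T σ).card := by
    intro σ
    rw [Finset.sum_sub_distrib, ← Finset.mul_sum]
    congr 1
    · rw [Finset.sum_filter]
      apply Finset.sum_congr rfl
      intro i _
      simp only [ind]; split_ifs <;> simp
    · congr 1
      rw [Finset.card_filter]
      push_cast
      apply Finset.sum_congr rfl
      intro i _
      simp only [ind]; split_ifs <;> simp
  simp only [hX] at hs
  have hPle : ∀ σ, ∑ i ∈ P σ, sgn (σ i) ≤ k := by
    intro σ
    calc ∑ i ∈ P σ, sgn (σ i) ≤ ∑ i ∈ P σ, (1 : ℝ) := by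
          apply Finset.sum_le_sum; intro i _; cases σ i <;> norm_num [sgn]
      _ = (P σ).card := by simp
      _ ≤ k := by exact_mod_cast (Finset.card_le_univ _).trans (by simp)
  let G : (Fin k → Bool) → Prop := fun σ => c / 4 * k ≤ ∑ i ∈ P σ, sgn (σ i) - M * (T σ).card
  have hG : c / 4 ≤ av fun σ => ind (G σ) := by
    have := av_markov (c := c / 4) (d := c / 4)
      (f := fun σ => (1 / (k : ℝ)) * (∑ i ∈ P σ, sgn (σ i) - M * (T σ).card)) (fun σ => by
        rw [one_div, inv_mul_le_iff₀ hkpos]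
        have : (0 : ℝ) ≤ M * (T σ).card := by positivity
        linarith [hPle σ]) (by
        rw [av_mul, one_div, ← div_eq_inv_mul, le_div_iff₀ hkpos]
        linarith) (by positivity)
    refine this.trans (av_mono fun σ => ind_mono fun h => ?_)
    rw [one_div, ← div_eq_inv_mul, le_div_iff₀ hkpos] at h
    exact h
  have hGT : ∀ σ, G σ → (T σ).card ≤ k / M ∧ c / 4 * k ≤ ∑ i ∈ P σ, sgn (σ i) := by
    intro σ h
    have h1 := hPle σ
    have h2 : c / 4 * k ≤ ∑ i ∈ P σ, sgn (σ i) - M * (T σ).card := h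
    have h3 : 0 < c / 4 * k := by positivity
    constructor
    · rw [Nat.le_div_iff_mul_le hM]
      have : ((T σ).card : ℝ) * M ≤ k := by linarith
      exact_mod_cast this
    · have : (0 : ℝ) ≤ M * (T σ).card := by positivity
      linarith
  set 𝓢 := Finset.univ.filter fun S : Finset (Fin k) => S.card ≤ k / M with h𝓢
  let 𝓕 : Finset (Fin k) → Finset (Finset (Fin k)) := fun T0 =>
    (Finset.univ.filter fun σ => G σ ∧ T σ = T0).image P
  -- some family is not too small
  have hex : ∃ T0, 𝓢.card < (𝓕 T0).card := by
    by_contra hcon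
    push Not at hcon
    have b1 : ∀ σ, ind (G σ) ≤ ∑ T0 ∈ 𝓢, ∑ R ∈ 𝓕 T0, ind (c / 4 * k ≤ ∑ i ∈ R, sgn (σ i)) := by
      intro σ
      by_cases hσ : G σ
      · have m1 : T σ ∈ 𝓢 := by simp [h𝓢, (hGT σ hσ).1]
        have m2 : P σ ∈ 𝓕 (T σ) := Finset.mem_image.2 ⟨σ, by simp [hσ], rfl⟩
        rw [ind_true hσ, ← ind_true (hGT σ hσ).2]
        refine le_trans ?_ (Finset.single_le_sum (f := fun T0 => ∑ R ∈ 𝓕 T0,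
          ind (c / 4 * k ≤ ∑ i ∈ R, sgn (σ i)))
          (fun _ _ => Finset.sum_nonneg fun _ _ => ind_nonneg _) m1)
        exact Finset.single_le_sum (f := fun R => ind (c / 4 * k ≤ ∑ i ∈ R, sgn (σ i)))
          (fun _ _ => ind_nonneg _) m2
      · rw [ind_false hσ]
        exact Finset.sum_nonneg fun _ _ => Finset.sum_nonneg fun _ _ => ind_nonneg _
    have b2 := hG.trans (av_mono b1)
    rw [av_sum] at b2
    have b3 : ∀ T0 ∈ 𝓢, av (fun σ : Fin k → Bool =>
        ∑ R ∈ 𝓕 T0, ind (c / 4 * k ≤ ∑ i ∈ R, sgn (σ i))) ≤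
        Real.exp (ζ * k) * Real.exp (-(4 * (ζ * k))) := by
      intro T0 _
      rw [av_sum]
      calc _ ≤ ∑ R ∈ 𝓕 T0, Real.exp (-(4 * (ζ * k))) := by
            apply Finset.sum_le_sum
            intro R _
            refine (chern R (by positivity)).trans_eq ?_
            congr 1; rw [hζ]; ring
        _ = (𝓕 T0).card * Real.exp (-(4 * (ζ * k))) := by simp
        _ ≤ _ := by
            gcongr
            refine le_trans ?_ (hsmall k)
            exact_mod_cast hcon T0
    have b4 := b2.trans (Finset.sum_le_sum b3)
    rw [Finset.sum_const, nsmul_eq_mul] at b4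
    have b5 : (𝓢.card : ℝ) * (Real.exp (ζ * k) * Real.exp (-(4 * (ζ * k)))) ≤
        Real.exp (ζ * k) * (Real.exp (ζ * k) * Real.exp (-(4 * (ζ * k)))) := by
      gcongr
      exact hsmall k
    have b6 := b4.trans b5
    rw [← Real.exp_add, ← Real.exp_add, show ζ * k + (ζ * k + -(4 * (ζ * k))) = -(2 * ζ * k) by ring, Real.exp_neg] at b6
    have b7 := Real.add_one_le_exp (2 * ζ * k)
    have b8 : 4 / c < 2 * ζ * k := by nlinarith
    have b9 : (Real.exp (2 * ζ * k))⁻¹ < c / 4 := by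
      rw [inv_lt_comm₀ (Real.exp_pos _) (by positivity), inv_div]
      linarith
    linarith
  obtain ⟨T0, hT0⟩ := hex
  obtain ⟨I, hI, hIc⟩ : ∃ I, (𝓕 T0).Shatters I ∧ k / M < I.card := by
    by_contra hcon
    push Not at hcon
    have : (𝓕 T0).shatterer ⊆ 𝓢 := by
      intro S hS
      rw [Finset.mem_shatterer] at hS
      simp [h𝓢, hcon S hS]
    have h2 := Finset.card_le_card this
    have h3 := Finset.card_le_card_shatterer (𝓕 T0)
    omega
  have hIT : ∀ i ∈ I, i ∉ T0 := by
    intro i hi hiT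
    obtain ⟨R, hR, hIR⟩ := hI (Finset.Subset.refl I)
    obtain ⟨σ, hσ, rfl⟩ := Finset.mem_image.1 hR
    have hσ2 := (Finset.mem_filter.1 hσ).2.2
    have hiP : i ∈ P σ := (Finset.mem_inter.1 (hIR.symm ▸ hi : i ∈ I ∩ P σ)).2
    rw [← hσ2] at hiT
    have u1 : U s i σ := (Finset.mem_filter.1 hiP).2
    have u2 : St s i σ := (Finset.mem_filter.1 hiT).2
    exact absurd u2.2 (not_lt.2 u1)
  refine ⟨I, ?_, fun i => ((s i : ℕ) + 1 / 2 : ℝ) / Q, fun i => ⟨by positivity, ?_⟩, fun x => ?_⟩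
  · rw [div_le_iff₀ hM']
    have := (Nat.div_lt_iff_lt_mul hM).1 hIc
    exact_mod_cast this.le
  · rw [div_le_one hQ0]
    have : ((s i : ℕ) : ℝ) + 1 ≤ Q := by exact_mod_cast (s i).2
    linarith
  · obtain ⟨R, hR, hIR⟩ := hI (Finset.filter_subset (fun i => x i = true) I)
    obtain ⟨σ, hσ, rfl⟩ := Finset.mem_image.1 hR
    have hσ2 := (Finset.mem_filter.1 hσ).2.2
    refine ⟨σ, fun i hi => ⟨fun hx => ?_, fun hx => ?_⟩⟩
    · have : i ∈ I ∩ P σ := by rw [hIR]; simp [hi, hx]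
      have u1 : ((s i : ℕ) + 1 : ℝ) ≤ a i σ * Q :=
        (Finset.mem_filter.1 (Finset.mem_inter.1 this).2).2
      rw [← div_le_iff₀ hQ0] at u1
      refine le_trans (le_of_eq ?_) u1
      field_simp; ring
    · have n1 : ¬ U s i σ := by
        intro h
        have : i ∈ I ∩ P σ := Finset.mem_inter.2 ⟨hi, by simp [P, h]⟩
        rw [hIR] at this
        simp [hx] at this
      have n2 : ¬ St s i σ := by
        intro h
        apply hIT i hi
        rw [← hσ2]
        simp [T, h]
      have n3 : a i σ * Q ≤ (s i : ℕ) := by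
        by_contra hcc
        exact n2 ⟨not_le.1 hcc, not_le.1 n1⟩
      rw [← le_div_iff₀ hQ0] at n3
      refine n3.trans (le_of_eq ?_)
      field_simp; ring

end FD

namespace FD

noncomputable def mkDec {N q : ℕ} {Ω : Type} [Fintype Ω] (w : Ω → ℝ)
    (F : Ω → Finset (Fin N) × ((Fin N → Bool) → Bool)) (hw : ∀ o, 0 ≤ w o)
    (hs : ∑ o, w o = 1) (hq : ∀ o, (F o).1.card ≤ q)
    (hl : ∀ o, ∀ y y' : Fin N → Bool, (∀ j ∈ (F o).1, y j = y' j) → (F o).2 y = (F o).2 y') :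
    Decoder N q := by
  classical
  have key : ∀ a, (∑ o, if F o = a then w o else 0) ≠ 0 → ∃ o, F o = a := by
    intro a ha
    by_contra hcon
    push Not at hcon
    exact ha (Finset.sum_eq_zero fun o _ => if_neg (hcon o))
  exact
  { p := fun a => ∑ o, if F o = a then w o else 0
    nonneg := fun a => Finset.sum_nonneg fun o _ => by split_ifs; exacts [hw o, le_rfl]
    sum_one := by
      rw [Finset.sum_comm]
      simpa using hs
    query_bound := by
      intro a ha
      obtain ⟨o, rfl⟩ := key a ha
      exact hq o
    local_dep := by
      intro a ha
      obtain ⟨o, rfl⟩ := key a ha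
      exact hl o }

theorem mkDec_correct {N q : ℕ} {Ω : Type} [Fintype Ω] (w : Ω → ℝ)
    (F : Ω → Finset (Fin N) × ((Fin N → Bool) → Bool)) (hw hs hq hl) (y : Fin N → Bool) (b : Bool) :
    (mkDec (q := q) w F hw hs hq hl).correctProb y b =
      ∑ o, w o * ind ((F o).2 y = b) := by
  classical
  have : ∀ a : Finset (Fin N) × ((Fin N → Bool) → Bool), (mkDec (q := q) w F hw hs hq hl).p a =
      ∑ o, if F o = a then w o else 0 := by
    intro a
    simp only [mkDec]
  unfold Decoder.correctProb
  simp only [this]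
  have h2 : ∀ a : Finset (Fin N) × ((Fin N → Bool) → Bool),
      (if a.2 y = b then (∑ o, if F o = a then w o else 0) else 0) =
      ∑ o, if F o = a then w o * ind ((F o).2 y = b) else 0 := by
    intro a
    split_ifs with h
    · apply Finset.sum_congr rfl
      intro o _
      split_ifs with h3
      · rw [h3, ind_true h, mul_one]
      · rfl
    · symm
      apply Finset.sum_eq_zero
      intro o _
      split_ifs with h3
      · rw [h3, ind_false h, mul_zero]
      · rfl
  simp only [h2]
  rw [Finset.sum_comm]
  simp

theorem Phi_close {p n : ℕ} [Fact p.Prime] (z : Fin n → ZMod p) (A B : Set (Fin n → ZMod p)) :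
    Phi z A ≤ Phi z B + p * av fun x : Fin n → ZMod p => ind (¬ (x ∈ A ↔ x ∈ B)) := by
  have h1 : (p : ℝ) * av (fun x : Fin n → ZMod p => ind (¬ (x ∈ A ↔ x ∈ B))) =
      av fun x : Fin n → ZMod p => ∑ a : ZMod p, ind (¬ (x + a • z ∈ A ↔ x + a • z ∈ B)) := by
    rw [av_sum]
    have : ∀ a : ZMod p, (av fun x : Fin n → ZMod p => ind (¬ (x + a • z ∈ A ↔ x + a • z ∈ B))) =
        av (fun x : Fin n → ZMod p => ind (¬ (x ∈ A ↔ x ∈ B))) := fun a =>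
      av_shift (fun x : Fin n → ZMod p => ind (¬ (x ∈ A ↔ x ∈ B))) (a • z)
    simp only [this]
    simp [ZMod.card]
  rw [h1, Phi, Phi, ← av_add]
  apply av_mono
  intro x
  have hnn : ∀ a ∈ (Finset.univ : Finset (ZMod p)), 0 ≤ ind (¬ (x + a • z ∈ A ↔ x + a • z ∈ B)) :=
    fun a _ => ind_nonneg _
  by_cases hB : ∀ a : ZMod p, x + a • z ∈ B
  · rw [ind_true hB]
    have := Finset.sum_nonneg hnn
    have := ind_le_one (∀ a : ZMod p, x + a • z ∈ A)
    linarith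
  · by_cases hA : ∀ a : ZMod p, x + a • z ∈ A
    · push Not at hB
      obtain ⟨a, ha⟩ := hB
      have h2 := Finset.single_le_sum hnn (Finset.mem_univ a)
      rw [ind_true (by simp [hA a, ha] : ¬ (x + a • z ∈ A ↔ x + a • z ∈ B))] at h2
      have := ind_le_one (∀ a : ZMod p, x + a • z ∈ A)
      have := ind_nonneg (∀ a : ZMod p, x + a • z ∈ B)
      linarith
    · rw [ind_false hA]
      have := Finset.sum_nonneg hnn
      have := ind_nonneg (∀ a : ZMod p, x + a • z ∈ B)
      linarith

theorem lineDec {p n : ℕ} [Fact p.Prime] (e : (Fin n → ZMod p) ≃ Fin (p ^ n))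
    (z : Fin n → ZMod p) (m : ℝ) (hm : 0 ≤ m) (hm1 : m ≤ 1) :
    ∃ D : Decoder (p ^ n) p, ∀ y : Fin (p ^ n) → Bool,
      D.correctProb y true = 1 / 2 + (Phi z {v | y (e v) = true} - m) / 2 ∧
      D.correctProb y false = 1 / 2 - (Phi z {v | y (e v) = true} - m) / 2 := by
  classical
  let V := Fin n → ZMod p
  have hV : (0 : ℝ) < Fintype.card V := by exact_mod_cast Fintype.card_pos
  let w : V ⊕ Bool → ℝ := Sum.elim (fun _ => 1 / (2 * Fintype.card V))
    (fun b => if b then (1 - m) / 2 else m / 2)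
  let F : V ⊕ Bool → Finset (Fin (p ^ n)) × ((Fin (p ^ n) → Bool) → Bool) := Sum.elim
    (fun x => (Finset.univ.image fun a : ZMod p => e (x + a • z),
      fun y => decide (∀ a : ZMod p, y (e (x + a • z)) = true)))
    (fun b => (∅, fun _ => b))
  have hw : ∀ o, 0 ≤ w o := by
    rintro (x | b)
    · simp only [w, Sum.elim_inl]; positivity
    · cases b <;> simp [w] <;> linarith
  have hs : ∑ o, w o = 1 := by
    simp only [w, Fintype.sum_sum_type, Sum.elim_inl, Sum.elim_inr, Finset.sum_const,
      Finset.card_univ, nsmul_eq_mul, Fintype.sum_bool]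
    field_simp
    simp
    ring
  have hq : ∀ o, (F o).1.card ≤ p := by
    rintro (x | b)
    · simp only [F, Sum.elim_inl]
      refine Finset.card_image_le.trans ?_
      simp [ZMod.card]
    · simp [F]
  have hl : ∀ o, ∀ y y' : Fin (p ^ n) → Bool, (∀ j ∈ (F o).1, y j = y' j) →
      (F o).2 y = (F o).2 y' := by
    rintro (x | b) y y' h
    · simp only [F, Sum.elim_inl] at h ⊢
      have : ∀ a : ZMod p, y (e (x + a • z)) = y' (e (x + a • z)) := fun a =>
        h _ (Finset.mem_image_of_mem _ (Finset.mem_univ a))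
      simp only [this]
    · rfl
  refine ⟨mkDec w F hw hs hq hl, fun y => ?_⟩
  have hT : ∑ o, w o * ind ((F o).2 y = true) =
      1 / 2 + (Phi z {v | y (e v) = true} - m) / 2 := by
    rw [Fintype.sum_sum_type, Fintype.sum_bool]
    simp only [w, F, Sum.elim_inl, Sum.elim_inr]
    rw [ind_true trivial, ind_false (P := false = true) (by simp), ← Finset.mul_sum, Phi, av_eq]
    simp only [decide_eq_true_eq, Set.mem_ofPred_eq, if_true, Bool.false_eq_true, if_false]
    change 1 / (2 * (Fintype.card V : ℝ)) * (∑ x : V, ind (∀ a : ZMod p, y (e (x + a • z)) = true)) +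
      _ = 1 / 2 + ((∑ x : V, ind (∀ a : ZMod p, y (e (x + a • z)) = true)) / (Fintype.card V : ℝ) -
        m) / 2
    field_simp
    ring
  have hTF : ∑ o, w o * ind ((F o).2 y = true) + ∑ o, w o * ind ((F o).2 y = false) = 1 := by
    rw [← Finset.sum_add_distrib, ← hs]
    apply Finset.sum_congr rfl
    intro o _
    cases (F o).2 y <;> simp [ind]
  rw [mkDec_correct, mkDec_correct]
  exact ⟨hT, by linarith⟩

theorem repDec {N q : ℕ} (hN : 0 < N) (hq : 1 ≤ q) : ∃ D : Decoder N q,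
    ∀ (y : Fin N → Bool) (b : Bool), D.correctProb y b =
      1 - ((Finset.univ.filter fun j => y j ≠ b).card : ℝ) / N := by
  classical
  have hN' : (0 : ℝ) < N := by exact_mod_cast hN
  refine ⟨mkDec (Ω := Fin N) (fun _ => 1 / N) (fun j => ({j}, fun y => y j)) (fun _ => by positivity)
    (by simp; field_simp) (fun _ => by simpa using hq) (by simp), fun y b => ?_⟩
  rw [mkDec_correct, ← Finset.mul_sum]
  have h1 : ∑ j : Fin N, ind (y j = b) =
      ((Finset.univ.filter fun j => y j = b).card : ℝ) := by
    rw [Finset.card_filter]; push_cast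
    apply Finset.sum_congr rfl
    intro i _
    simp only [ind]; split_ifs <;> simp
  simp only [h1]
  have h2 := Finset.card_filter_add_card_filter_not (s := (Finset.univ : Finset (Fin N)))
    (fun j => y j = b)
  rw [Finset.card_univ, Fintype.card_fin] at h2
  have h3 : ((Finset.univ.filter fun j => y j = b).card : ℝ) +
    ((Finset.univ.filter fun j => y j ≠ b).card : ℝ) = N := by exact_mod_cast h2
  field_simp
  linarith

end FD

namespace FD

theorem Phi_mem {p n : ℕ} [Fact p.Prime] (z : Fin n → ZMod p) (B : Set (Fin n → ZMod p)) :
    0 ≤ Phi z B ∧ Phi z B ≤ 1 :=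
  ⟨av_nonneg fun _ => ind_nonneg _, av_le fun _ => ind_le_one _⟩

theorem Phi_zero {p n : ℕ} [Fact p.Prime] (z : Fin n → ZMod p) (B : Set (Fin n → ZMod p))
    (h : ∀ x : Fin n → ZMod p, ¬ ∀ a : ZMod p, x + a • z ∈ B) : Phi z B = 0 := by
  unfold Phi
  have : (fun x : Fin n → ZMod p => ind (∀ a : ZMod p, x + a • z ∈ B)) = fun _ => (0 : ℝ) := by
    ext x; exact ind_false (h x)
  rw [this]; exact av_const _

theorem gap {p n k : ℕ} [Fact p.Prime] (hn : 0 < n) {ε κ : ℝ}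
    (hv : ∀ B : Set (Fin n → ZMod p), ε ≤ av (fun x => ind (x ∈ B)) →
      κ ≤ av fun z : {v : Fin n → ZMod p // v ≠ 0} => Phi z.1 B) (hκ : 0 < κ)
    (h : Nat.card (Fin k → {v : Fin n → ZMod p // v ≠ 0}) ≤
      2 * Set.ncard {z : Fin k → {v : Fin n → ZMod p // v ≠ 0} |
        ∃ B : Finset (Fin n → ZMod p),
          ε * (p : ℝ) ^ n ≤ B.card ∧
          ∀ i : Fin k, ∀ x : Fin n → ZMod p,
            ¬ (∀ lam : ZMod p, x + lam • (z i : Fin n → ZMod p) ∈ B)}) :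
    ∃ (z : Fin k → {v : Fin n → ZMod p // v ≠ 0})
      (S : (Fin k → Bool) → Set (Fin n → ZMod p)),
      κ / 4 * k ≤ av fun σ : Fin k → Bool => ∑ i, sgn (σ i) * Phi (z i).1 (S σ) := by
  classical
  let Z := {v : Fin n → ZMod p // v ≠ 0}
  haveI : NeZero n := ⟨hn.ne'⟩
  haveI : Nonempty Z := ⟨⟨fun _ => 1, fun h => one_ne_zero (congrFun h 0)⟩⟩
  have hp : (0 : ℝ) < p := by exact_mod_cast (Fact.out : p.Prime).pos
  obtain ⟨G, hG⟩ : ∃ G : Set (Fin k → Z), G = {z : Fin k → {v : Fin n → ZMod p // v ≠ 0} |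
        ∃ B : Finset (Fin n → ZMod p),
          ε * (p : ℝ) ^ n ≤ B.card ∧
          ∀ i : Fin k, ∀ x : Fin n → ZMod p,
            ¬ (∀ lam : ZMod p, x + lam • (z i : Fin n → ZMod p) ∈ B)} := ⟨_, rfl⟩
  rw [← hG] at h
  have hB : ∀ z : Fin k → Z, ∃ B : Set (Fin n → ZMod p),
      (∀ i, Phi (z i).1 B = 0) ∧ κ * ind (z ∈ G) ≤ av fun w : Z => Phi w.1 B := by
    intro z
    by_cases hz : z ∈ G
    · have hz' := hz
      rw [hG] at hz'
      obtain ⟨B, hBc, hBl⟩ := hz'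
      refine ⟨B, fun i => Phi_zero _ _ (by simpa using hBl i), ?_⟩
      rw [ind_true hz, mul_one]
      apply hv
      rw [av_ind_card, Set.ncard_coe_finset, Nat.card_eq_fintype_card, le_div_iff₀]
      · simpa [ZMod.card] using hBc
      · exact_mod_cast Fintype.card_pos
    · refine ⟨∅, fun i => Phi_zero _ _ (by simp), ?_⟩
      rw [ind_false hz, mul_zero]
      exact av_nonneg fun w => (Phi_mem _ _).1
  choose B hB0 hB1 using hB
  obtain ⟨z, S, hzS⟩ := symmetrize (fun (w : Z) (B : Set (Fin n → ZMod p)) => Phi w.1 B) k B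
    (κ / 2 * k) (by
      have h1 : (av fun z : Fin k → Z => ((k : ℝ) * κ) * ind (z ∈ G)) ≤
          av fun z : Fin k → Z => ∑ i, ((av fun w : Z => Phi w.1 (B z)) - Phi (z i).1 (B z)) := by
        apply av_mono
        intro z
        simp only [hB0, sub_zero, Finset.sum_const, Finset.card_univ, Fintype.card_fin,
          nsmul_eq_mul]
        have := hB1 z
        rw [mul_assoc]
        gcongr
      refine le_trans ?_ h1
      rw [av_mul, av_ind_card]
      have hc : (0 : ℝ) < Nat.card (Fin k → Z) := by exact_mod_cast Nat.card_pos
      have h2 : (1 : ℝ) / 2 ≤ (G.ncard : ℝ) / Nat.card (Fin k → Z) := by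
        rw [div_le_div_iff₀ (by norm_num) hc]
        have : (Nat.card (Fin k → Z) : ℝ) ≤ 2 * G.ncard := by exact_mod_cast h
        linarith
      calc κ / 2 * k = (k : ℝ) * κ * (1 / 2) := by ring
        _ ≤ _ := by gcongr)
  exact ⟨z, S, le_trans (le_of_eq (by ring)) hzS⟩

theorem mainCode {p n k : ℕ} [Fact p.Prime] (z : Fin k → (Fin n → ZMod p))
    (S : (Fin k → Bool) → Set (Fin n → ZMod p)) (I : Finset (Fin k)) (m : Fin k → ℝ)
    (hm : ∀ i, 0 ≤ m i ∧ m i ≤ 1) {θ c : ℝ} (hc : p * c + 2 * c ≤ θ)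
    (hS : ∀ x : Fin k → Bool, ∃ σ : Fin k → Bool, ∀ i ∈ I,
      (x i = true → m i + θ ≤ Phi (z i) (S σ)) ∧ (x i = false → Phi (z i) (S σ) ≤ m i - θ)) :
    ∃ C : (Fin I.card → Bool) → Fin (p ^ n) → Bool, IsLDC I.card (p ^ n) p c c C := by
  classical
  have hcard : Fintype.card (Fin n → ZMod p) = p ^ n := by simp [ZMod.card]
  let e : (Fin n → ZMod p) ≃ Fin (p ^ n) := Fintype.equivFinOfCardEq hcard
  have hN : (0 : ℝ) < ((p ^ n : ℕ) : ℝ) := by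
    exact_mod_cast pow_pos (Fact.out : p.Prime).pos n
  choose σ hσ using hS
  let ext : (Fin I.card → Bool) → Fin k → Bool := fun x i =>
    if h : i ∈ I then x (I.equivFin ⟨i, h⟩) else false
  refine ⟨fun x j => decide (e.symm j ∈ S (σ (ext x))), fun i => ?_⟩
  obtain ⟨i0, hi0⟩ : ∃ i0, i0 = I.equivFin.symm i := ⟨_, rfl⟩
  obtain ⟨D, hD⟩ := lineDec e (z i0.1) (m i0.1) (hm _).1 (hm _).2
  refine ⟨D, fun x y hy => ?_⟩
  have hx : ext x i0.1 = x i := by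
    simp only [ext, i0.2, dif_pos, Subtype.coe_eta]
    rw [hi0]; simp
  have hs := hσ (ext x) i0.1 i0.2
  rw [hx] at hs
  have hdist : (av fun v : Fin n → ZMod p =>
      ind (¬ (v ∈ {v | y (e v) = true} ↔ v ∈ S (σ (ext x))))) ≤ c := by
    have h1 := av_equiv e.symm (fun v : Fin n → ZMod p =>
      ind (¬ (v ∈ {v | y (e v) = true} ↔ v ∈ S (σ (ext x)))))
    rw [← h1, av_eq, Fintype.card_fin, div_le_iff₀ hN]
    refine le_trans (le_of_eq ?_) hy
    rw [Finset.card_filter]; push_cast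
    apply Finset.sum_congr rfl
    intro j _
    simp only [ind, Set.mem_ofPred_eq, Equiv.apply_symm_apply]
    by_cases hj : e.symm j ∈ S (σ (ext x)) <;> cases hy : y j <;> simp [hj]
  have hdist' : (av fun v : Fin n → ZMod p =>
      ind (¬ (v ∈ S (σ (ext x)) ↔ v ∈ {v | y (e v) = true}))) ≤ c := by
    refine le_trans (le_of_eq ?_) hdist
    congr 1; ext v
    congr 1
    exact propext (not_congr iff_comm)
  have c1 := Phi_close (z i0.1) {v | y (e v) = true} (S (σ (ext x)))
  have c2 := Phi_close (z i0.1) (S (σ (ext x))) {v | y (e v) = true}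
  have hp : (0 : ℝ) ≤ p := by positivity
  have d1 := mul_le_mul_of_nonneg_left hdist hp
  have d2 := mul_le_mul_of_nonneg_left hdist' hp
  cases hb : x i
  · rw [(hD y).2]
    have := hs.2 hb
    linarith
  · rw [(hD y).1]
    have := hs.1 hb
    linarith

theorem repCode {N q : ℕ} (hN : 0 < N) (hq : 1 ≤ q) {c : ℝ} (hc : c ≤ 1 / 4) :
    ∃ C : (Fin 1 → Bool) → Fin N → Bool, IsLDC 1 N q c c C := by
  classical
  refine ⟨fun x _ => x 0, fun i => ?_⟩
  obtain ⟨D, hD⟩ := repDec hN hq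
  refine ⟨D, fun x y hy => ?_⟩
  rw [hD, Subsingleton.elim i 0]
  have hN' : (0 : ℝ) < N := by exact_mod_cast hN
  have := (div_le_iff₀ hN').2 hy
  linarith

end FD

theorem forbidden_directions_to_LDC :
    ∃ c0 : ℝ, 0 < c0 ∧
    ∀ p : ℕ, ∀ _ : Fact p.Prime, p ≠ 2 → ∀ ε : ℝ, ε ∈ Set.Ioc (0 : ℝ) 1 →
    ∃ (n1 : ℕ) (c : ℝ), 0 < n1 ∧ c ∈ Set.Ioc (0 : ℝ) (1/2) ∧
    ∀ n k : ℕ, n1 ≤ n → 0 < k →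
    -- with probability at least 1/2 over independent uniform directions …
    Nat.card (Fin k → {v : Fin n → ZMod p // v ≠ 0}) ≤
      2 * Set.ncard {z : Fin k → {v : Fin n → ZMod p // v ≠ 0} |
        ∃ B : Finset (Fin n → ZMod p),
          ε * (p : ℝ) ^ n ≤ B.card ∧
          -- B contains no line with direction among the (classes of the) z i
          ∀ i : Fin k, ∀ x : Fin n → ZMod p,
            ¬ (∀ lam : ZMod p, x + lam • (z i : Fin n → ZMod p) ∈ B)} →
    ∃ (l : ℕ) (C : (Fin l → Bool) → Fin (p ^ n) → Bool),
      IsLDC l (p ^ n) p c c C ∧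
      c0 * c ^ 2 * k / Real.log (1/c) ≤ l := by
  refine ⟨1, one_pos, fun p hpf _ ε hε => ?_⟩
  have hp : 0 < p := hpf.out.pos
  obtain ⟨κ, hκ, n1, hn1, hv⟩ := FD.varn p hε.1
  obtain ⟨Q, M, k0, hQ, hM, hsh⟩ := FD.shat (c := min (κ / 4) 1) (by positivity) (min_le_right _ _)
  obtain ⟨W, hW⟩ : ∃ W : ℕ, W = 2 * Q * (p + 2) + M + k0 + 4 := ⟨_, rfl⟩
  have hW4 : (4 : ℝ) ≤ W := by rw [hW]; exact_mod_cast (by omega)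
  have hWM : (M : ℝ) ≤ W := by rw [hW]; exact_mod_cast (by omega)
  have hWk : (k0 : ℝ) ≤ W := by rw [hW]; exact_mod_cast (by omega)
  have hWQ : (2 * Q * (p + 2) : ℝ) ≤ W := by rw [hW]; exact_mod_cast (by omega)
  have hW0 : (0 : ℝ) < W := by linarith
  have hQ' : (0 : ℝ) < Q := by exact_mod_cast hQ
  have hM' : (0 : ℝ) < M := by exact_mod_cast hM
  have hlog : 1 ≤ Real.log W := by
    rw [Real.le_log_iff_exp_le hW0]
    have := Real.exp_one_lt_d9
    linarith
  refine ⟨n1, 1 / W, hn1, ⟨by positivity, ?_⟩, fun n k hn hk h => ?_⟩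
  · rw [div_le_div_iff₀ hW0 (by norm_num)]; linarith
  have hbound : 1 * (1 / (W : ℝ)) ^ 2 * k / Real.log (1 / (1 / (W : ℝ))) ≤ k / W := by
    rw [one_div_one_div, one_mul]
    refine (div_le_self (by positivity) hlog).trans ?_
    rw [div_pow, one_pow, div_mul_eq_mul_div, one_mul]
    gcongr
    nlinarith
  rcases lt_or_ge k k0 with hk0 | hk0
  · obtain ⟨C, hC⟩ := FD.repCode (N := p ^ n) (q := p) (pow_pos hp n) hp (c := 1 / W) (by
      gcongr)
    refine ⟨1, C, hC, hbound.trans ?_⟩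
    rw [div_le_iff₀ hW0]
    have : (k : ℝ) ≤ k0 := by exact_mod_cast hk0.le
    push_cast
    linarith
  · obtain ⟨z, S, hzS⟩ := FD.gap (by omega) (hv n hn) hκ h
    obtain ⟨I, hI, m, hm, hx⟩ := hsh k hk0 (fun i σ => FD.Phi (z i).1 (S σ))
      (fun i σ => FD.Phi_mem _ _) (by
        refine le_trans ?_ hzS
        gcongr
        exact min_le_left _ _)
    obtain ⟨C, hC⟩ := FD.mainCode (fun i => (z i).1) S I m hm (θ := 1 / (2 * Q)) (c := 1 / W) (by
      rw [← add_mul, mul_one_div, div_le_div_iff₀ hW0 (by positivity)]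
      linarith) hx
    refine ⟨I.card, C, hC, hbound.trans (le_trans ?_ hI)⟩
    gcongr
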